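/- arXiv:1512.08708 — 3 statements merged into one kernel-verified Lean document; each statement's English description precedes it below -/
import Mathlib

section
/- Let f(t, X) ∈ ℚ[t][X] be a polynomial in X with coefficients in ℚ[t] which, regarded as a polynomial over ℚ(t), is monic in X, irreducible, and separable. Then there exists a ∈ ℚ such that the specialized polynomial f(a, X) ∈ ℚ[X] is irreducible over ℚ and the Galois group of f(a, X) over ℚ (the Galois group of its splitting field over ℚ) is isomorphic to the Galois group of f(t, X) over ℚ(t) (the Galois group of its splitting field over ℚ(t)). -/
open Polynomial

theorem hit_newton {R : Type*} [CommRing R] (J : Ideal R) (h : R[X]) (x0 v : R)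
    (h0 : h.eval x0 ∈ J) (h1 : v * h.derivative.eval x0 - 1 ∈ J) (n : ℕ) :
    ∃ F : R, F - x0 ∈ J ∧ h.eval F ∈ J ^ (n + 1) := by
  induction n with
  | zero => exact ⟨x0, by simp, by simpa using h0⟩
  | succ n ih =>
    obtain ⟨F, hF0, hF⟩ := ih
    have hFJ : h.eval F ∈ J := Ideal.pow_le_self (Nat.succ_ne_zero n) hF
    refine ⟨F + (-(v * h.eval F)), ?_, ?_⟩
    · have : F + (-(v * h.eval F)) - x0 = (F - x0) - v * h.eval F := by ring
      rw [this]
      exact J.sub_mem hF0 (J.mul_mem_left _ hFJ)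
    · obtain ⟨k, hk⟩ := binomExpansion h F (-(v * h.eval F))
      obtain ⟨z, hz⟩ := evalSubFactor h.derivative F x0
      rw [hk, pow_succ]
      have e : h.eval F + h.derivative.eval F * (-(v * h.eval F)) + k * (-(v * h.eval F)) ^ 2
        = h.eval F * (-(v * h.derivative.eval x0 - 1) - v * (z * (F - x0))
            + k * v ^ 2 * h.eval F) := by
        rw [← hz]; ring
      rw [e]
      refine Ideal.mul_mem_mul hF ?_
      refine J.add_mem (J.sub_mem (J.neg_mem h1) ?_) (J.mul_mem_left _ hFJ)
      exact J.mul_mem_left _ (J.mul_mem_left _ hF0)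

theorem hit_newton_unique (h : ℤ[X]) (p v x0 x y : ℤ) (n : ℕ)
    (h1 : p ∣ v * h.derivative.eval x0 - 1) (hx : p ∣ x - x0) (hy : p ∣ y - x0)
    (hxy : p ^ n ∣ h.eval x - h.eval y) : p ^ n ∣ x - y := by
  obtain ⟨k, hk⟩ := binomExpansion h y (x - y)
  obtain ⟨z, hz⟩ := evalSubFactor h.derivative y x0
  have e : h.eval x - h.eval y = (h.derivative.eval y + k * (x - y)) * (x - y) := by
    rw [add_sub_cancel] at hk; rw [hk]; ring
  rw [e] at hxy
  refine IsCoprime.dvd_of_dvd_mul_left ?_ hxy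
  apply IsCoprime.pow_left
  have h2 : p ∣ v * (h.derivative.eval y + k * (x - y)) - 1 := by
    have : v * (h.derivative.eval y + k * (x - y)) - 1 =
      (v * h.derivative.eval x0 - 1) + v * z * (y - x0) + v * k * ((x - x0) - (y - x0)) := by
      have : h.derivative.eval y = h.derivative.eval x0 + z * (y - x0) := by rw [← hz]; ring
      rw [this]; ring
    rw [this]
    exact dvd_add (dvd_add h1 (hy.mul_left _)) ((dvd_sub hx hy).mul_left _)
  obtain ⟨w, hw⟩ := h2
  exact ⟨-w, v, by linear_combination hw⟩

theorem hit_eval_map (h : ℤ[X][X]) (F : ℤ[X]) (t : ℤ) :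
    (h.eval F).eval t = (h.map (evalRingHom t)).eval (F.eval t) := by
  have := Polynomial.eval_map_apply (f := evalRingHom t) (p := h) F
  simpa using this.symm

/-- Local parametrisation. -/
theorem hit_local (h : ℤ[X][X]) (p t0 x0 v : ℤ) (n : ℕ)
    (h0 : p ∣ (h.map (evalRingHom t0)).eval x0)
    (h1 : p ∣ v * (h.map (evalRingHom t0)).derivative.eval x0 - 1) :
    ∃ F : ℤ[X], F.degree < (n + 1 : ℕ) ∧ ∀ u x : ℤ, (h.map (evalRingHom (t0 + p * u))).eval x = 0 →
      p ∣ x - x0 → p ^ (n + 1) ∣ x - F.eval (t0 + p * u) := by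
  set J : Ideal ℤ[X] := Ideal.span {C p, X - C t0} with hJ
  have hev : ∀ u : ℤ, ∀ n : ℕ, ∀ g ∈ J ^ n, p ^ n ∣ g.eval (t0 + p * u) := by
    intro u n g hg
    have : J.map (evalRingHom (t0 + p * u)) ≤ Ideal.span {p} := by
      rw [hJ, Ideal.map_span, Ideal.span_le]
      rintro _ ⟨g, hg, rfl⟩
      rcases hg with rfl | hg
      · simp
      · rw [Set.mem_singleton_iff] at hg; subst hg
        simp [Ideal.mem_span_singleton]
    have h2 := Ideal.mem_map_of_mem (evalRingHom (t0 + p * u)) hg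
    rw [Ideal.map_pow] at h2
    have h3 := Ideal.pow_right_mono this n h2
    rwa [Ideal.span_singleton_pow, Ideal.mem_span_singleton] at h3
  have hJmem : ∀ g : ℤ[X], p ∣ g.eval t0 → g ∈ J := by
    intro g ⟨c, hc⟩
    have h2 : g = (g /ₘ (X - C t0)) * (X - C t0) + C c * C p := by
      have := modByMonic_add_div g (X - C t0)
      rw [modByMonic_X_sub_C_eq_C_eval, hc] at this
      rw [← C_mul, mul_comm c p]
      nth_rw 1 [← this]; ring
    rw [h2]
    exact J.add_mem (J.mul_mem_left _ (Ideal.subset_span (by simp)))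
      (J.mul_mem_left _ (Ideal.subset_span (by simp)))
  obtain ⟨F, hF0, hF⟩ := hit_newton J h (C x0) (C v)
    (hJmem _ (by rw [hit_eval_map]; simpa using h0))
    (hJmem _ (by
      rw [eval_sub, eval_mul, hit_eval_map, eval_C, eval_C, eval_one, ← derivative_map]
      exact h1)) n
  have hm : ((X - C t0 : ℤ[X]) ^ (n + 1)).Monic := (monic_X_sub_C t0).pow _
  refine ⟨F %ₘ (X - C t0) ^ (n + 1), ?_, ?_⟩
  · refine (degree_modByMonic_lt F hm).trans_le ?_
    rw [degree_pow, degree_X_sub_C]; simp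
  · intro u x hx hxx
    have a1 : p ^ (n + 1) ∣ x - F.eval (t0 + p * u) := by
      apply hit_newton_unique (h.map (evalRingHom (t0 + p * u))) p v x0 x _ (n + 1)
      · have e1 := hev u 1 (C v * (h.derivative.eval (C x0)) - 1) (by
          rw [pow_one]; apply hJmem
          rw [eval_sub, eval_mul, hit_eval_map, eval_C, eval_C, eval_one, ← derivative_map]
          exact h1)
        rw [pow_one, eval_sub, eval_mul, hit_eval_map, eval_C, eval_C, eval_one,
          ← derivative_map] at e1
        exact e1
      · exact hxx
      · have := hev u 1 (F - C x0) (by simpa using hF0)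
        simpa using this
      · rw [hx, zero_sub, dvd_neg, ← hit_eval_map]
        exact hev u _ _ hF
    have a2 : F.eval (t0 + p * u) = (F %ₘ (X - C t0) ^ (n + 1)).eval (t0 + p * u)
        + p ^ (n + 1) * (u ^ (n + 1) * (F /ₘ (X - C t0) ^ (n + 1)).eval (t0 + p * u)) := by
      conv_lhs => rw [← modByMonic_add_div F ((X - C t0) ^ (n + 1))]
      simp [mul_pow, mul_assoc]
    have : x - (F %ₘ (X - C t0) ^ (n + 1)).eval (t0 + p * u) = (x - F.eval (t0 + p * u)) +
       p ^ (n + 1) * (u ^ (n + 1) * (F /ₘ (X - C t0) ^ (n + 1)).eval (t0 + p * u)) := by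
      rw [a2]; ring
    rw [this]
    exact dvd_add a1 (dvd_mul_right _ _)

/-- Vanishing of divided differences. -/
theorem hit_divdiff (S : Finset ℕ) (n Q : ℕ) (hS : S.card = n + 1) (hSQ : ∀ u ∈ S, u < Q)
    (p t0 : ℤ) (hp : 0 < p) (F : ℤ[X]) (hF : F.degree < n) (x : ℕ → ℤ)
    (hx : ∀ u ∈ S, p ^ n ∣ x u - F.eval (t0 + p * u))
    (M : ℝ) (hM : ∀ u ∈ S, |(x u : ℝ)| ≤ M)
    (hbig : (Q : ℝ) ^ ((n + 1) * n) * ((n + 1) * M) < p ^ n) :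
    ∑ u ∈ S, (x u : ℚ) / ∏ r ∈ S.erase u, ((t0 + p * u : ℚ) - (t0 + p * r)) = 0 := by
  classical
  set v : ℕ → ℚ := fun u => t0 + p * u with hv
  have hpQ : (p : ℚ) ≠ 0 := by exact_mod_cast hp.ne'
  have hinj : Set.InjOn v S := by
    intro a _ b _ hab
    simpa [hv, hpQ] using hab
  choose! e he using hx
  have hprod : ∀ u ∈ S, ∏ r ∈ S.erase u, (v u - v r) = p ^ n * ∏ r ∈ S.erase u, ((u : ℚ) - r) := by
    intro u hu
    have : ∀ r ∈ S.erase u, v u - v r = p * ((u : ℚ) - r) := by intro r _; simp only [hv]; ring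
    rw [Finset.prod_congr rfl this, Finset.prod_mul_distrib, Finset.prod_const,
      Finset.card_erase_of_mem hu, hS]; simp
  have hne : ∀ u ∈ S, ∏ r ∈ S.erase u, ((u : ℚ) - r) ≠ 0 := by
    intro u hu
    rw [Finset.prod_ne_zero_iff]
    intro r hr
    have := Finset.ne_of_mem_erase hr
    rw [sub_ne_zero]; exact_mod_cast this.symm
  have hFd : ∑ u ∈ S, ((F.map (Int.castRingHom ℚ)).eval (v u)) / ∏ r ∈ S.erase u, (v u - v r) = 0 := by
    have hd : (F.map (Int.castRingHom ℚ)).degree < n := lt_of_le_of_lt degree_map_le hF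
    rw [← Lagrange.coeff_eq_sum hinj (hd.trans (by rw [hS]; exact_mod_cast Nat.lt_succ_self n)), hS]
    exact coeff_eq_zero_of_degree_lt (by simpa using hd)
  set D := ∑ u ∈ S, (x u : ℚ) / ∏ r ∈ S.erase u, (v u - v r) with hD
  have hD2 : D = ∑ u ∈ S, (e u : ℚ) / ∏ r ∈ S.erase u, ((u : ℚ) - r) := by
    rw [← sub_zero D, ← hFd, hD, ← Finset.sum_sub_distrib]
    refine Finset.sum_congr rfl fun u hu => ?_
    rw [hprod u hu, ← sub_div]
    have : (x u : ℚ) - (F.map (Int.castRingHom ℚ)).eval (v u) = p ^ n * e u := by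
      have h3 : v u = ((t0 + p * u : ℤ) : ℚ) := by simp [hv]
      have h4 : (F.map (Int.castRingHom ℚ)).eval (v u) = ((F.eval (t0 + p * u) : ℤ) : ℚ) := by
        rw [h3, eval_intCast_map]; simp
      rw [h4]
      exact_mod_cast he u hu
    rw [this, mul_div_mul_left _ _ (pow_ne_zero n hpQ)]
  by_contra hDne
  set W : ℤ := ∏ u ∈ S, ∏ r ∈ S.erase u, ((u : ℤ) - r) with hW
  have hWne : W ≠ 0 := by
    rw [hW, Finset.prod_ne_zero_iff]; intro u hu
    have := hne u hu
    exact_mod_cast this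
  have hWD : ∃ z : ℤ, (W : ℚ) * D = z := by
    rw [hD2, Finset.mul_sum]
    refine ⟨∑ u ∈ S, e u * ∏ w ∈ S.erase u, ∏ r ∈ S.erase w, ((w : ℤ) - r), ?_⟩
    push_cast
    refine Finset.sum_congr rfl fun u hu => ?_
    rw [hW, ← Finset.mul_prod_erase S _ hu]
    push_cast
    field_simp [hne u hu]
  obtain ⟨z, hz⟩ := hWD
  have hz0 : z ≠ 0 := by
    rintro rfl
    simp [hWne, hDne] at hz
  have hz1 : (1 : ℝ) ≤ |(z : ℝ)| := by exact_mod_cast Int.one_le_abs hz0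
  have hWb : |(W : ℝ)| ≤ (Q : ℝ) ^ ((n + 1) * n) := by
    rw [hW]; push_cast
    rw [Finset.abs_prod]
    calc ∏ u ∈ S, |∏ r ∈ S.erase u, ((u : ℝ) - r)| ≤ ∏ u ∈ S, (Q : ℝ) ^ n := by
          refine Finset.prod_le_prod (fun _ _ => abs_nonneg _) fun u hu => ?_
          rw [Finset.abs_prod]
          calc ∏ r ∈ S.erase u, |(u : ℝ) - r| ≤ ∏ r ∈ S.erase u, (Q : ℝ) := by
                refine Finset.prod_le_prod (fun _ _ => abs_nonneg _) fun r hr => ?_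
                have h1 : (u : ℝ) < Q := by exact_mod_cast hSQ u hu
                have h2 : (r : ℝ) < Q := by exact_mod_cast hSQ r (Finset.mem_of_mem_erase hr)
                have h3 : (0 : ℝ) ≤ u := by positivity
                have h4 : (0 : ℝ) ≤ r := by positivity
                rw [abs_le]; constructor <;> linarith
            _ = _ := by rw [Finset.prod_const, Finset.card_erase_of_mem hu, hS]; simp
      _ = _ := by rw [Finset.prod_const, hS, ← pow_mul, mul_comm]
  have hDb : |(D : ℝ)| * p ^ n ≤ (n + 1) * M := by
    have : (D : ℝ) * p ^ n = ∑ u ∈ S, (x u : ℝ) / ∏ r ∈ S.erase u, ((u : ℝ) - r) := by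
      have : D * p ^ n = ∑ u ∈ S, (x u : ℚ) / ∏ r ∈ S.erase u, ((u : ℚ) - r) := by
        rw [hD, Finset.sum_mul]
        refine Finset.sum_congr rfl fun u hu => ?_
        rw [hprod u hu]
        have := hne u hu
        field_simp
      have := congrArg (fun q : ℚ => (q : ℝ)) this
      push_cast at this
      exact this
    have hpn : |(p : ℝ) ^ n| = p ^ n := abs_of_nonneg (by positivity)
    rw [← hpn, ← abs_mul, this]
    refine (Finset.abs_sum_le_sum_abs _ _).trans ?_
    calc _ ≤ ∑ u ∈ S, M := by
          refine Finset.sum_le_sum fun u hu => ?_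
          rw [abs_div]
          refine (div_le_self (abs_nonneg _) ?_).trans (hM u hu)
          have := hne u hu
          have h5 : (∏ r ∈ S.erase u, ((u : ℤ) - r)) ≠ 0 := by exact_mod_cast this
          have := Int.one_le_abs h5
          exact_mod_cast this
      _ = _ := by rw [Finset.sum_const, hS]; simp
  have hzr : (W : ℝ) * D = z := by exact_mod_cast congrArg (fun q : ℚ => (q : ℝ)) hz
  rw [← hzr, abs_mul] at hz1
  have hpp : (0 : ℝ) < (p : ℝ) ^ n := by positivity
  have : (p : ℝ) ^ n ≤ (Q : ℝ) ^ ((n + 1) * n) * ((n + 1) * M) := by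
    calc (p : ℝ) ^ n = 1 * p ^ n := by ring
      _ ≤ (|(W : ℝ)| * |(D : ℝ)|) * p ^ n := by gcongr
      _ = |(W : ℝ)| * (|(D : ℝ)| * p ^ n) := by ring
      _ ≤ _ := by gcongr
  linarith

theorem hit_interp (U : Finset ℕ) (n Q : ℕ) (hU : n ≤ U.card) (hUQ : ∀ u ∈ U, u < Q)
    (p t0 : ℤ) (hp : 0 < p) (F : ℤ[X]) (hF : F.degree < n) (x : ℕ → ℤ)
    (hx : ∀ u ∈ U, p ^ n ∣ x u - F.eval (t0 + p * u))
    (M : ℝ) (hM : ∀ u ∈ U, |(x u : ℝ)| ≤ M)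
    (hbig : (Q : ℝ) ^ ((n + 1) * n) * ((n + 1) * M) < p ^ n) :
    ∃ P : ℚ[X], P.degree < n ∧ ∀ u ∈ U, P.eval (t0 + p * u : ℚ) = x u := by
  classical
  obtain ⟨S, hSU, hS⟩ := Finset.exists_subset_card_eq hU
  set v : ℕ → ℚ := fun u => t0 + p * u with hv
  have hpQ : (p : ℚ) ≠ 0 := by exact_mod_cast hp.ne'
  have hinj : Function.Injective v := by
    intro a b hab
    simpa [hv, hpQ] using hab
  set P := Lagrange.interpolate S v (fun u => (x u : ℚ)) with hP
  have hPd : P.degree < n := by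
    have := Lagrange.degree_interpolate_lt (fun u => (x u : ℚ)) (s := S) (v := v) hinj.injOn
    rwa [hS] at this
  refine ⟨P, hPd, fun u hu => ?_⟩
  by_cases huS : u ∈ S
  · exact Lagrange.eval_interpolate_at_node _ hinj.injOn huS
  have hT : (insert u S).card = n + 1 := by rw [Finset.card_insert_of_notMem huS, hS]
  have hTU : ∀ w ∈ insert u S, w ∈ U := by
    intro w hw
    rcases Finset.mem_insert.1 hw with rfl | hw
    · exact hu
    · exact hSU hw
  have key := hit_divdiff (insert u S) n Q hT (fun w hw => hUQ w (hTU w hw)) p t0 hp F hF x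
    (fun w hw => hx w (hTU w hw)) M (fun w hw => hM w (hTU w hw)) hbig
  set I := Lagrange.interpolate (insert u S) v (fun u => (x u : ℚ)) with hI
  have hId : I.degree < (n + 1 : ℕ) := by
    have := Lagrange.degree_interpolate_lt (fun u => (x u : ℚ)) (s := insert u S) (v := v) hinj.injOn
    rwa [hT] at this
  have hIe : ∀ w ∈ insert u S, I.eval (v w) = x w := fun w hw =>
    Lagrange.eval_interpolate_at_node (fun u => (x u : ℚ)) hinj.injOn hw
  have hIc : I.coeff n = 0 := by
    have := Lagrange.coeff_eq_sum (s := insert u S) (v := v) hinj.injOn (P := I) (by rwa [hT])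
    rw [hT, Nat.add_sub_cancel] at this
    rw [this, ← key]
    refine Finset.sum_congr rfl fun w hw => ?_
    rw [hIe w hw]
  have hId' : I.degree < n := by
    rw [degree_lt_iff_coeff_zero] at hId ⊢
    intro m hm
    rcases hm.eq_or_lt with rfl | hm
    · exact hIc
    · exact hId m hm
  have : I = P := by
    rw [hP]
    refine Lagrange.eq_interpolate_of_eval_eq _ hinj.injOn (by rwa [hS]) ?_
    intro w hw
    exact hIe w (Finset.mem_insert_of_mem hw)
  rw [← this]
  exact hIe u (Finset.mem_insert_self _ _)

theorem hit_poly_bound (g : ℤ[X]) : ∃ C : ℝ, 0 ≤ C ∧ ∀ k, g.natDegree ≤ k → ∀ t : ℤ,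
    |((g.eval t : ℤ) : ℝ)| ≤ C * (1 + |(t : ℝ)|) ^ k := by
  refine ⟨∑ i ∈ Finset.range (g.natDegree + 1), |(g.coeff i : ℝ)|, by positivity, ?_⟩
  intro k hk t
  rw [eval_eq_sum_range]
  push_cast
  refine (Finset.abs_sum_le_sum_abs _ _).trans ?_
  rw [Finset.sum_mul]
  refine Finset.sum_le_sum fun i hi => ?_
  rw [abs_mul, abs_pow]
  have h1 : |(t : ℝ)| ^ i ≤ (1 + |(t : ℝ)|) ^ k := by
    calc |(t : ℝ)| ^ i ≤ (1 + |(t : ℝ)|) ^ i := by gcongr; linarith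
      _ ≤ _ := by
        apply pow_le_pow_right₀
        · linarith [abs_nonneg (t : ℝ)]
        · have := Finset.mem_range.1 hi; omega
  gcongr

theorem hit_root_bound (h : ℤ[X][X]) (hm : h.Monic) : ∃ C : ℝ, ∃ k : ℕ, 0 ≤ C ∧
    ∀ t x : ℤ, (h.map (evalRingHom t)).eval x = 0 → |(x : ℝ)| ≤ C * (1 + |(t : ℝ)|) ^ k := by
  choose C hC0 hC using hit_poly_bound
  set k := h.support.sup (fun i => (h.coeff i).natDegree) with hk
  refine ⟨∑ i ∈ Finset.range h.natDegree, C (h.coeff i) + 1, k, ?_, ?_⟩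
  · have := Finset.sum_nonneg (s := Finset.range h.natDegree) (fun i _ => hC0 (h.coeff i))
    linarith
  intro t x hx
  have hcoef : ∀ i, |(((h.coeff i).eval t : ℤ) : ℝ)| ≤ C (h.coeff i) * (1 + |(t : ℝ)|) ^ k := by
    intro i
    by_cases hi : i ∈ h.support
    · exact hC _ k (Finset.le_sup (f := fun i => (h.coeff i).natDegree) hi) t
    · rw [notMem_support_iff] at hi
      rw [hi]; simp only [eval_zero, Int.cast_zero, abs_zero]
      have := hC0 0
      positivity
  set q : ℝ[X] := (h.map (evalRingHom t)).map (Int.castRingHom ℝ) with hq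
  have hqm : q.Monic := (hm.map _).map _
  have hroot : q.IsRoot (x : ℝ) := by
    rw [IsRoot.def, hq, eval_intCast_map]
    simp only [Int.cast_id, eq_intCast]
    rw [hx]; simp
  have hb := hroot.norm_lt_cauchyBound hqm.ne_zero
  have hT : (1 : ℝ) ≤ (1 + |(t : ℝ)|) ^ k := one_le_pow₀ (by linarith [abs_nonneg (t : ℝ)])
  have hb2 : (q.cauchyBound : ℝ) ≤ (∑ i ∈ Finset.range h.natDegree, C (h.coeff i) + 1) *
      (1 + |(t : ℝ)|) ^ k := by
    rw [cauchyBound, hqm.leadingCoeff]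
    simp only [nnnorm_one, div_one, NNReal.coe_add, NNReal.coe_one]
    have hs : ((Finset.range q.natDegree).sup (fun i => ‖q.coeff i‖₊) : NNReal) ≤
        ∑ i ∈ Finset.range q.natDegree, ‖q.coeff i‖₊ := by
      refine Finset.sup_le fun i hi => ?_
      exact Finset.single_le_sum (f := fun i => ‖q.coeff i‖₊) (fun _ _ => zero_le) hi
    have hs' : (((Finset.range q.natDegree).sup (fun i => ‖q.coeff i‖₊) : NNReal) : ℝ) ≤
        ∑ i ∈ Finset.range q.natDegree, ‖q.coeff i‖ := by
      have := NNReal.coe_le_coe.2 hs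
      simpa using this
    have hdeg : q.natDegree = h.natDegree := by
      rw [hq, (hm.map _).natDegree_map, hm.natDegree_map]
    rw [add_mul, one_mul]
    refine add_le_add (hs'.trans ?_) hT
    rw [hdeg, Finset.sum_mul]
    refine Finset.sum_le_sum fun i _ => ?_
    have := hcoef i
    simpa [hq] using this
  have : |(x : ℝ)| < (q.cauchyBound : ℝ) := by
    have := NNReal.coe_lt_coe.2 hb
    simpa using this
  linarith

/-- For an `h` without polynomial roots, few arguments in a progression have integral roots. -/
theorem hit_count (h A B : ℤ[X][X]) (D : ℤ[X]) (hm : h.Monic)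
    (hAB : A * h + B * h.derivative = C D) (t0 : ℤ) (ht0 : D.eval t0 ≠ 0)
    (hno : ∀ P : ℚ[X], (h.map (mapRingHom (Int.castRingHom ℚ))).eval P ≠ 0) :
    ∃ E : ℕ, ∀ Q : ℕ, ∃ p0 : ℕ, ∀ p : ℕ, p.Prime → p0 ≤ p → ∀ U : Finset ℕ, (∀ u ∈ U, u < Q) →
      (∀ u ∈ U, ∃ x : ℤ, (h.map (evalRingHom (t0 + p * u))).eval x = 0) → U.card ≤ E := by
  classical
  obtain ⟨Cb, k, hCb, hbound⟩ := hit_root_bound h hm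
  -- uniform degree bound
  set E0 := h.support.sup (fun i => (h.coeff i).natDegree + i * k) with hE0
  set E1 := max (k + 1) E0 with hE1
  refine ⟨h.natDegree * E1, fun Q => ?_⟩
  set M0 : ℝ := Cb * (1 + |(t0 : ℝ)| + Q) ^ k with hM0
  obtain ⟨p1, hp1⟩ := exists_nat_gt ((Q : ℝ) ^ ((k + 1 + 1) * (k + 1)) * ((k + 1 + 1) * M0))
  refine ⟨max p1 ((D.eval t0).natAbs + 1), fun p hp hpp U hUQ hU => ?_⟩
  have hpp1 : p1 ≤ p := (le_max_left _ _).trans hpp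
  have hpD : (D.eval t0).natAbs + 1 ≤ p := (le_max_right _ _).trans hpp
  have hpndvd : ¬ (p : ℤ) ∣ D.eval t0 := by
    intro hd
    have := Int.natAbs_dvd_natAbs.2 hd
    rw [Int.natAbs_natCast] at this
    have := Nat.le_of_dvd (Int.natAbs_pos.2 ht0) this
    omega
  choose! x hx using hU
  have : Fact p.Prime := ⟨hp⟩
  have hp1R : (1 : ℝ) ≤ p := by exact_mod_cast hp.one_le
  set hbar : (ZMod p)[X] := (h.map (evalRingHom t0)).map (Int.castRingHom (ZMod p)) with hhbar
  have hbm : hbar.Monic := (hm.map _).map _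
  have hbd : hbar.natDegree = h.natDegree := by
    rw [hhbar, (hm.map _).natDegree_map, hm.natDegree_map]
  have hmem : ∀ u ∈ U, (x u : ZMod p) ∈ hbar.roots.toFinset := by
    intro u hu
    rw [Multiset.mem_toFinset, mem_roots hbm.ne_zero, IsRoot.def, hhbar]
    have e1 : (h.map (evalRingHom t0)).map (Int.castRingHom (ZMod p)) =
      (h.map (evalRingHom (t0 + p * u))).map (Int.castRingHom (ZMod p)) := by
      rw [map_map, map_map]; congr 1
      ext <;> simp
    rw [e1, eval_intCast_map]
    simp [hx u hu]
  have hfib : ∀ c ∈ hbar.roots.toFinset, (U.filter (fun u => (x u : ZMod p) = c)).card ≤ E1 := by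
    intro c hc
    by_contra hlt
    push Not at hlt
    set V := U.filter (fun u => (x u : ZMod p) = c) with hV
    have hVU : ∀ u ∈ V, u ∈ U := fun u hu => (Finset.mem_filter.1 hu).1
    obtain ⟨x0, rfl⟩ := ZMod.intCast_surjective c
    have hroot : (p : ℤ) ∣ (h.map (evalRingHom t0)).eval x0 := by
      rw [Multiset.mem_toFinset, mem_roots hbm.ne_zero, IsRoot.def, hhbar, eval_intCast_map] at hc
      exact (ZMod.intCast_zmod_eq_zero_iff_dvd _ p).1 (by simpa using hc)
    have hder : ¬ (p : ℤ) ∣ (h.map (evalRingHom t0)).derivative.eval x0 := by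
      intro hd
      apply hpndvd
      have := congrArg (fun g => (g.map (evalRingHom t0)).eval x0) hAB
      simp only [Polynomial.map_add, Polynomial.map_mul, eval_add, eval_mul, map_C, eval_C,
        coe_evalRingHom, ← derivative_map] at this
      rw [← this]
      exact dvd_add (hroot.mul_left _) (hd.mul_left _)
    obtain ⟨v, hv⟩ : ∃ v : ℤ, (p : ℤ) ∣ v * (h.map (evalRingHom t0)).derivative.eval x0 - 1 := by
      have hc := (Prime.coprime_iff_not_dvd (Nat.prime_iff_prime_int.1 hp)).2 hder
      obtain ⟨a, b, hab⟩ := hc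
      exact ⟨b, -a, by linear_combination hab⟩
    obtain ⟨F, hFd, hF⟩ := hit_local h p t0 x0 v k hroot hv
    obtain ⟨P, hPd, hP⟩ := hit_interp V (k + 1) Q
      ((le_max_left _ _).trans hlt.le) (fun u hu => hUQ u (hVU u hu)) p t0
      (by exact_mod_cast hp.pos) F hFd x
      (fun u hu => hF u (x u) (hx u (hVU u hu)) (by
        have := (Finset.mem_filter.1 hu).2
        exact (ZMod.intCast_eq_intCast_iff_dvd_sub _ _ _).1 this.symm))
      (M0 * p ^ k)
      (by
        intro u hu
        refine (hbound _ _ (hx u (hVU u hu))).trans ?_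
        rw [hM0, mul_assoc, ← mul_pow]
        gcongr
        have huQ : (u : ℝ) ≤ Q := by exact_mod_cast (hUQ u (hVU u hu)).le
        push_cast
        have h1 : |(t0 : ℝ) + p * u| ≤ |(t0 : ℝ)| + p * u := by
          refine (abs_add_le _ _).trans ?_
          rw [abs_of_nonneg (by positivity : (0 : ℝ) ≤ p * u)]
        have h2 : (p : ℝ) * u ≤ p * Q := by gcongr
        have h3 : (1 + |(t0 : ℝ)|) * 1 ≤ (1 + |(t0 : ℝ)|) * p := by gcongr
        nlinarith)
      (by
        have h4 : (p1 : ℝ) ≤ p := by exact_mod_cast hpp1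
        have h5 : (0 : ℝ) < (p : ℝ) ^ k := by positivity
        push_cast
        calc _ = ((Q : ℝ) ^ ((k + 1 + 1) * (k + 1)) * ((k + 1 + 1) * M0)) * p ^ k := by ring
          _ < p * p ^ k := by
            apply mul_lt_mul_of_pos_right _ h5
            linarith
          _ = _ := by ring)
    -- the polynomial h(t, P(t))
    set R : ℚ[X] := (h.map (mapRingHom (Int.castRingHom ℚ))).eval P with hR
    have hR0 : R ≠ 0 := hno P
    have hPn : P.natDegree ≤ k := by
      rcases eq_or_ne P 0 with rfl | hP0
      · simp
      · have := (natDegree_lt_iff_degree_lt hP0).2 hPd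
        omega
    have hRd : R.natDegree ≤ E0 := by
      rw [hR, eval_map, eval₂_eq_sum, Polynomial.sum]
      refine natDegree_sum_le_of_forall_le _ _ fun i hi => ?_
      refine natDegree_mul_le.trans ?_
      refine le_trans (add_le_add ?_ ?_)
        (Finset.le_sup (f := fun i => (h.coeff i).natDegree + i * k) hi)
      · simpa using natDegree_map_le
      · exact natDegree_pow_le.trans (Nat.mul_le_mul_left _ hPn)
    have hinj : Function.Injective (fun u : ℕ => (t0 + p * u : ℚ)) := by
      intro a b hab
      have : (p : ℚ) ≠ 0 := by exact_mod_cast hp.ne_zero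
      simpa [this] using hab
    have hsub : V.image (fun u : ℕ => (t0 + p * u : ℚ)) ⊆ R.roots.toFinset := by
      intro y hy
      obtain ⟨u, hu, rfl⟩ := Finset.mem_image.1 hy
      rw [Multiset.mem_toFinset, mem_roots hR0, IsRoot.def, hR]
      have e1 := Polynomial.eval_map_apply (f := evalRingHom (t0 + p * u : ℚ))
        (p := h.map (mapRingHom (Int.castRingHom ℚ))) P
      simp only [coe_evalRingHom] at e1
      rw [← e1, show ((t0 : ℚ) + p * u) = t0 + ((p : ℤ) : ℚ) * u by simp, hP u hu, map_map]
      have e2 : (evalRingHom (t0 + ((p : ℤ) : ℚ) * u : ℚ)).comp (mapRingHom (Int.castRingHom ℚ)) =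
          (Int.castRingHom ℚ).comp (evalRingHom (t0 + p * u)) := by
        ext <;> simp
      rw [e2, ← map_map, eval_intCast_map]
      simp [hx u (hVU u hu)]
    have := (Finset.card_le_card hsub).trans
      ((Multiset.toFinset_card_le _).trans ((card_roots' R).trans hRd))
    rw [Finset.card_image_of_injective _ hinj] at this
    have : E0 ≤ E1 := le_max_right _ _
    omega
  have := Finset.card_le_mul_card_image_of_maps_to (s := U) (f := fun u => (x u : ZMod p)) hmem E1 hfib
  refine this.trans ?_
  rw [mul_comm]
  refine Nat.mul_le_mul_right _ ?_
  rw [← hbd]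
  exact (Multiset.toFinset_card_le _).trans (card_roots' _)

theorem hit_main {ι : Type*} [Finite ι] (h A B : ι → ℤ[X][X]) (D : ι → ℤ[X])
    (hm : ∀ i, (h i).Monic) (hD : ∀ i, D i ≠ 0)
    (hAB : ∀ i, A i * h i + B i * (h i).derivative = C (D i))
    (hno : ∀ i, ∀ P : ℚ[X], ((h i).map (mapRingHom (Int.castRingHom ℚ))).eval P ≠ 0)
    (d : ℚ[X]) (hd : d ≠ 0) :
    ∃ a : ℤ, d.eval (a : ℚ) ≠ 0 ∧ ∀ i, ∀ x : ℤ, ((h i).map (evalRingHom a)).eval x ≠ 0 := by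
  classical
  cases nonempty_fintype ι
  obtain ⟨t0, ht0⟩ : ∃ t0 : ℤ, (∏ i, D i).eval t0 ≠ 0 := by
    by_contra hcon
    push Not at hcon
    have : (∏ i, D i) = 0 := Polynomial.funext (by simpa using hcon)
    exact Finset.prod_ne_zero_iff.2 (fun i _ => hD i) this
  rw [eval_prod, Finset.prod_ne_zero_iff] at ht0
  choose E hE using fun i => hit_count (h i) (A i) (B i) (D i) (hm i) (hAB i) t0
    (ht0 i (Finset.mem_univ _)) (hno i)
  set Q := ∑ i, E i + d.natDegree + 1 with hQ
  choose p0 hp0 using fun i => hE i Q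
  obtain ⟨p, hpge, hp⟩ := Nat.exists_infinite_primes (∑ i, p0 i)
  have hpi : ∀ i, p0 i ≤ p := fun i =>
    (Finset.single_le_sum (f := p0) (fun _ _ => Nat.zero_le _) (Finset.mem_univ i)).trans hpge
  set U : ι → Finset ℕ := fun i => (Finset.range Q).filter
    (fun u => ∃ x : ℤ, ((h i).map (evalRingHom (t0 + p * u))).eval x = 0) with hU
  set U' : Finset ℕ := (Finset.range Q).filter
    (fun u => d.eval (((t0 + p * u : ℤ)) : ℚ) = 0) with hU'
  have hUc : ∀ i, (U i).card ≤ E i := fun i => hp0 i p hp (hpi i) (U i)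
    (fun u hu => Finset.mem_range.1 (Finset.mem_filter.1 hu).1)
    (fun u hu => (Finset.mem_filter.1 hu).2)
  have hU'c : U'.card ≤ d.natDegree := by
    have hinj : Function.Injective (fun u : ℕ => (((t0 + p * u : ℤ)) : ℚ)) := by
      intro a b hab
      have : (p : ℚ) ≠ 0 := by exact_mod_cast hp.ne_zero
      simpa [this, hp.ne_zero] using hab
    rw [← Finset.card_image_of_injective _ hinj]
    refine le_trans (Finset.card_le_card (t := d.roots.toFinset) ?_)
      ((Multiset.toFinset_card_le _).trans (card_roots' d))
    intro y hy
    obtain ⟨u, hu, rfl⟩ := Finset.mem_image.1 hy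
    rw [Multiset.mem_toFinset, mem_roots hd]
    exact (Finset.mem_filter.1 hu).2
  have hcard : (Finset.univ.biUnion U ∪ U').card < (Finset.range Q).card := by
    refine (Finset.card_union_le _ _).trans_lt ?_
    have := Finset.card_biUnion_le (s := Finset.univ) (t := U)
    have := Finset.sum_le_sum (s := Finset.univ) (fun i _ => hUc i)
    rw [Finset.card_range]
    omega
  obtain ⟨u, huQ, hu⟩ := Finset.exists_mem_notMem_of_card_lt_card hcard
  rw [Finset.notMem_union] at hu
  refine ⟨t0 + p * u, fun h0 => hu.2 (Finset.mem_filter.2 ⟨huQ, h0⟩), fun i x h0 => hu.1 ?_⟩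
  exact Finset.mem_biUnion.2 ⟨i, Finset.mem_univ _, Finset.mem_filter.2 ⟨huQ, x, h0⟩⟩

theorem hit_bezout {R K : Type*} [CommRing R] [IsDomain R] [Field K] [Algebra R K]
    [IsFractionRing R K] (h : R[X]) (hs : (h.map (algebraMap R K)).Separable) :
    ∃ (A B : R[X]) (D : R), D ≠ 0 ∧ A * h + B * h.derivative = C D := by
  obtain ⟨a, b, hab⟩ := hs
  obtain ⟨r, hr⟩ := IsLocalization.integerNormalization_map_to_map (nonZeroDivisors R) a
  obtain ⟨s, hs⟩ := IsLocalization.integerNormalization_map_to_map (nonZeroDivisors R) b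
  set a' := IsLocalization.integerNormalization (nonZeroDivisors R) a
  set b' := IsLocalization.integerNormalization (nonZeroDivisors R) b
  refine ⟨C (s : R) * a', C (r : R) * b', r * s,
    mul_ne_zero (nonZeroDivisors.coe_ne_zero r) (nonZeroDivisors.coe_ne_zero s), ?_⟩
  apply map_injective (algebraMap R K) (IsFractionRing.injective R K)
  simp only [Polynomial.map_add, Polynomial.map_mul, map_C, hr, hs, ← derivative_map]
  rw [Algebra.smul_def, Algebra.smul_def, IsScalarTower.algebraMap_apply R K K[X],
    IsScalarTower.algebraMap_apply R K K[X], algebraMap_eq]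
  simp only [map_mul]
  linear_combination (C (algebraMap R K r) * C (algebraMap R K s)) * hab

theorem hit_fraction (K : Type*) [Field K] [Algebra ℚ[X] K] [IsFractionRing ℚ[X] K] 
    [Algebra ℤ[X] K]
    (hc : algebraMap ℤ[X] K = (algebraMap ℚ[X] K).comp (mapRingHom (Int.castRingHom ℚ))) :
    IsFractionRing ℤ[X] K := by
  have hinj : Function.Injective (algebraMap ℤ[X] K) := by
    rw [hc]
    exact (IsFractionRing.injective ℚ[X] K).comp (map_injective _ Int.cast_injective)
  have : FaithfulSMul ℤ[X] K := (faithfulSMul_iff_algebraMap_injective _ _).2 hinj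
  have hcl : ∀ q : ℚ[X], ∃ (r : ℤ[X]) (m : ℤ), m ≠ 0 ∧
      algebraMap ℤ[X] K r = algebraMap ℤ[X] K (C m) * algebraMap ℚ[X] K q := by
    intro q
    obtain ⟨m, hm⟩ := IsLocalization.integerNormalization_map_to_map (nonZeroDivisors ℤ) q
    refine ⟨IsLocalization.integerNormalization (nonZeroDivisors ℤ) q, m, nonZeroDivisors.coe_ne_zero m, ?_⟩
    rw [hc, RingHom.comp_apply, RingHom.comp_apply, ← map_mul]
    congr 1
    simp only [coe_mapRingHom]
    have e : (Int.castRingHom ℚ) = algebraMap ℤ ℚ := rfl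
    rw [e, hm]
    ext i
    simp
  refine IsFractionRing.of_field ℤ[X] K fun z => ?_
  obtain ⟨a, b, hb, rfl⟩ := IsFractionRing.div_surjective ℚ[X] z
  obtain ⟨r, m, hm, hr⟩ := hcl a
  obtain ⟨s, n, hn, hs⟩ := hcl b
  have hb' : algebraMap ℚ[X] K b ≠ 0 := by
    simpa using nonZeroDivisors.ne_zero hb
  have hm' : algebraMap ℤ[X] K (C m) ≠ 0 := (map_ne_zero_iff _ hinj).2 (C_ne_zero.2 hm)
  have hn' : algebraMap ℤ[X] K (C n) ≠ 0 := (map_ne_zero_iff _ hinj).2 (C_ne_zero.2 hn)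
  refine ⟨r * C n, s * C m, ?_⟩
  rw [map_mul, map_mul, hr, hs]
  field_simp

theorem hit_elem {K L : Type*} [Field K] [Algebra ℚ[X] K] [IsFractionRing ℚ[X] K]
    [Field L] [Algebra K L] [Algebra ℚ[X] L] [IsScalarTower ℚ[X] K L]
    [Algebra.IsAlgebraic K L] (y : L) (hy : y ∉ Set.range (algebraMap K L)) :
    ∃ z : K, z ≠ 0 ∧ ∃ (h A B : ℤ[X][X]) (D : ℤ[X]), h.Monic ∧ D ≠ 0 ∧
      A * h + B * h.derivative = C D ∧
      (∀ P : ℚ[X], (h.map (mapRingHom (Int.castRingHom ℚ))).eval P ≠ 0) ∧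
      aeval (z • y) (h.map (mapRingHom (Int.castRingHom ℚ))) = 0 := by
  letI a1 : Algebra ℤ[X] K := ((algebraMap ℚ[X] K).comp (mapRingHom (Int.castRingHom ℚ))).toAlgebra
  letI a2 : Algebra ℤ[X] L := ((algebraMap K L).comp (algebraMap ℤ[X] K)).toAlgebra
  have : IsScalarTower ℤ[X] K L := IsScalarTower.of_algebraMap_eq' rfl
  have : IsFractionRing ℤ[X] K := hit_fraction K rfl
  have : CharZero K := charZero_of_injective_algebraMap (IsFractionRing.injective ℤ[X] K)
  have : Algebra.IsAlgebraic ℤ[X] K := IsLocalization.isAlgebraic K (nonZeroDivisors ℤ[X])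
  have : Algebra.IsAlgebraic ℤ[X] L := Algebra.IsAlgebraic.trans ℤ[X] K L
  obtain ⟨w, hw, hintg⟩ := IsAlgebraic.exists_integral_multiple (Algebra.IsAlgebraic.isAlgebraic (R := ℤ[X]) y)
  have hz : algebraMap ℤ[X] K w ≠ 0 := by simpa using hw
  refine ⟨algebraMap ℤ[X] K w, hz, ?_⟩
  rw [algebraMap_smul]
  set c := w • y with hc
  have hcK : c ∉ Set.range (algebraMap K L) := by
    rintro ⟨k, hk⟩
    apply hy
    refine ⟨(algebraMap ℤ[X] K w)⁻¹ * k, ?_⟩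
    rw [map_mul, hk, hc, ← algebraMap_smul K w y, Algebra.smul_def, ← mul_assoc, ← map_mul,
      inv_mul_cancel₀ hz]
    simp
  have hmin : minpoly K c = (minpoly ℤ[X] c).map (algebraMap ℤ[X] K) :=
    minpoly.isIntegrallyClosed_eq_field_fractions' K hintg
  have hintK : IsIntegral K c := hintg.tower_top
  obtain ⟨A, B, D, hD, hAB⟩ := hit_bezout (K := K) (minpoly ℤ[X] c) (by
    rw [← hmin]; exact (minpoly.irreducible hintK).separable)
  refine ⟨minpoly ℤ[X] c, A, B, D, minpoly.monic hintg, hD, hAB, ?_, ?_⟩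
  · intro P hP
    have h1 : (minpoly K c).eval (algebraMap ℚ[X] K P) = 0 := by
      rw [hmin]
      have : algebraMap ℤ[X] K = (algebraMap ℚ[X] K).comp (mapRingHom (Int.castRingHom ℚ)) := rfl
      rw [this, ← map_map, eval_map_apply, hP, map_zero]
    have h2 := minpoly.mem_range_of_degree_eq_one K c
      (degree_eq_one_of_irreducible_of_root (minpoly.irreducible hintK) h1)
    exact hcK h2
  · have h1 := minpoly.aeval ℤ[X] c
    rw [aeval_def, eval₂_map]
    rw [aeval_def] at h1
    have e : (algebraMap ℚ[X] L).comp (mapRingHom (Int.castRingHom ℚ)) = algebraMap ℤ[X] L := by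
      rw [IsScalarTower.algebraMap_eq ℚ[X] K L]; rfl
    rw [e, h1]

open Pointwise in
theorem hit_residue.{u} {B : Type u} [CommRing B] [Algebra ℚ[X] B] [FaithfulSMul ℚ[X] B]
    (G : Type u) [Group G] [Finite G] [MulSemiringAction G B]
    [SMulCommClass G ℚ[X] B] [Algebra.IsInvariant ℚ[X] B G] (a : ℚ) :
    ∃ (N : Type u) (_ : Field N) (_ : Algebra ℚ N) (π : B →+* N) (D : Subgroup G)
      (S : D →* Gal(N/ℚ)), IsGalois ℚ N ∧ FiniteDimensional ℚ N ∧
      (∀ q : ℚ[X], π (algebraMap ℚ[X] B q) = algebraMap ℚ N (q.eval a)) ∧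
      Function.Surjective S ∧ ∀ (σ : D) (b : B), S σ (π b) = π ((σ : G) • b) := by
  set P : Ideal ℚ[X] := RingHom.ker (evalRingHom a) with hP
  have hPm : P.IsMaximal := RingHom.ker_isMaximal_of_surjective _
    (fun r => ⟨C r, by simp⟩)
  have hintg : Algebra.IsIntegral ℚ[X] B := Algebra.IsInvariant.isIntegral ℚ[X] B G
  obtain ⟨Q, hQm, hQP⟩ := Ideal.exists_maximal_ideal_liesOver_of_isIntegral (S := B) P
  letI iF : Field (B ⧸ Q) := Ideal.Quotient.field Q
  letI iFP : Field (ℚ[X] ⧸ P) := Ideal.Quotient.field P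
  letI iA : Algebra (ℚ[X] ⧸ P) ℚ := (Ideal.Quotient.lift P (evalRingHom a) (fun q hq => hq)).toAlgebra
  have hA : ∀ q : ℚ[X], algebraMap (ℚ[X] ⧸ P) ℚ (Ideal.Quotient.mk P q) = q.eval a := fun q => rfl
  letI iN : Algebra ℚ (B ⧸ Q) := ((algebraMap (ℚ[X] ⧸ P) (B ⧸ Q)).comp
    ((Ideal.Quotient.mk P).comp C)).toAlgebra
  have hN : ∀ r : ℚ, algebraMap ℚ (B ⧸ Q) r =
    algebraMap (ℚ[X] ⧸ P) (B ⧸ Q) (Ideal.Quotient.mk P (C r)) := fun r => rfl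
  have hmk : ∀ q : ℚ[X], Ideal.Quotient.mk P q = Ideal.Quotient.mk P (C (q.eval a)) := by
    intro q
    rw [Ideal.Quotient.eq, hP, RingHom.mem_ker]; simp
  have tower : IsScalarTower (ℚ[X] ⧸ P) ℚ (B ⧸ Q) := by
    refine IsScalarTower.of_algebraMap_eq fun x => ?_
    obtain ⟨q, rfl⟩ := Ideal.Quotient.mk_surjective x
    rw [hA, hN, ← hmk]
  have hfaith : FaithfulSMul (ℚ[X] ⧸ P) ℚ :=
    (faithfulSMul_iff_algebraMap_injective _ _).2 (RingHom.injective _)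
  have hfr : IsFractionRing (ℚ[X] ⧸ P) ℚ := by
    refine IsFractionRing.of_field (ℚ[X] ⧸ P) ℚ fun z => ?_
    exact ⟨Ideal.Quotient.mk P (C z), 1, by rw [hA]; simp⟩
  have hnorm : Normal ℚ (B ⧸ Q) := Ideal.IsFractionRing.normal G P Q ℚ (B ⧸ Q)
  have hgal : IsGalois ℚ (B ⧸ Q) := ⟨⟩
  have hfin : Module.Finite ℚ (B ⧸ Q) := Ideal.IsFractionRing.finite_of_isInvariant G P Q ℚ (B ⧸ Q)
  refine ⟨B ⧸ Q, iF, iN, Ideal.Quotient.mk Q, MulAction.stabilizer G Q,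
    IsFractionRing.stabilizerHom G P Q ℚ (B ⧸ Q), hgal, hfin, ?_,
    IsFractionRing.stabilizerHom_surjective G P Q ℚ (B ⧸ Q), ?_⟩
  · intro q
    rw [hN, ← hmk]; rfl
  · intro σ b
    exact IsFractionRing.stabilizerHom_apply_apply_mk G P Q ℚ (B ⧸ Q) σ b

theorem hit_choose {K L : Type} [Field K] [Algebra ℚ[X] K] [IsFractionRing ℚ[X] K]
    [Field L] [Algebra K L] [Algebra ℚ[X] L] [IsScalarTower ℚ[X] K L]
    [FiniteDimensional K L] [IsGalois K L] (d : ℚ[X]) (hd : d ≠ 0) :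
    ∃ a : ℚ, d.eval a ≠ 0 ∧ ∃ (N : Type) (_ : Field N) (_ : Algebra ℚ N)
      (π : integralClosure ℚ[X] L →+* N)
      (S : Gal(L/K) →* Gal(N/ℚ)), IsGalois ℚ N ∧ FiniteDimensional ℚ N ∧
      (∀ q : ℚ[X], π (algebraMap ℚ[X] _ q) = algebraMap ℚ N (q.eval a)) ∧
      Function.Surjective S ∧ ∀ (σ : Gal(L/K)) (b b' : integralClosure ℚ[X] L),
        (b' : L) = σ (b : L) → S σ (π b) = π b' := by
  let iact : MulSemiringAction Gal(L/K) (integralClosure ℚ[X] L) :=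
    IsIntegralClosure.MulSemiringAction ℚ[X] K L (integralClosure ℚ[X] L)
  have hfrac : IsFractionRing (integralClosure ℚ[X] L) L :=
    integralClosure.isFractionRing_of_finite_extension K L
  have hinv : Algebra.IsInvariant ℚ[X] (integralClosure ℚ[X] L) Gal(L/K) :=
    Algebra.isInvariant_of_isGalois ℚ[X] K L (integralClosure ℚ[X] L)
  have hact : ∀ (σ : Gal(L/K)) (b : integralClosure ℚ[X] L), ((σ • b : integralClosure ℚ[X] L) : L) = σ (b : L) :=
    fun σ b => algebraMap_galRestrict_apply ℚ[X] σ b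
  have hinjL : Function.Injective (algebraMap ℚ[X] L) := by
    rw [IsScalarTower.algebraMap_eq ℚ[X] K L]
    exact (algebraMap K L).injective.comp (IsFractionRing.injective ℚ[X] K)
  have hfaith : FaithfulSMul ℚ[X] (integralClosure ℚ[X] L) := by
    rw [faithfulSMul_iff_algebraMap_injective]
    intro x y hxy
    exact hinjL (congrArg (fun z : integralClosure ℚ[X] L => (z : L)) hxy)
  have hcomm : SMulCommClass Gal(L/K) ℚ[X] (integralClosure ℚ[X] L) := by
    refine ⟨fun σ q b => ?_⟩
    apply Subtype.ext
    rw [hact]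
    simp only [Algebra.smul_def, MulMemClass.coe_mul, map_mul, hact]
    congr 1
    change σ (algebraMap ℚ[X] L q) = algebraMap ℚ[X] L q
    rw [IsScalarTower.algebraMap_apply ℚ[X] K L, AlgEquiv.commutes]
  have key : ∀ H : {H : Subgroup Gal(L/K) // H ≠ ⊤}, ∃ (c : integralClosure ℚ[X] L)
      (h A B : ℤ[X][X]) (D : ℤ[X]), (∀ σ ∈ H.1, σ (c : L) = c) ∧ h.Monic ∧ D ≠ 0 ∧
      A * h + B * h.derivative = C D ∧
      (∀ P : ℚ[X], (h.map (mapRingHom (Int.castRingHom ℚ))).eval P ≠ 0) ∧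
      aeval (c : L) (h.map (mapRingHom (Int.castRingHom ℚ))) = 0 := by
    rintro ⟨H, hH⟩
    have h1 : ∃ y ∈ IntermediateField.fixedField H, y ∉ Set.range (algebraMap K L) := by
      by_contra! hcon
      apply hH
      rw [← IntermediateField.fixingSubgroup_fixedField H]
      rw [eq_top_iff]
      intro σ _
      rw [IntermediateField.mem_fixingSubgroup_iff]
      intro y hy
      obtain ⟨k, rfl⟩ := hcon y hy
      exact σ.commutes k
    obtain ⟨y, hyH, hy⟩ := h1
    obtain ⟨z, hz, h, A, B, D, hm, hD, hAB, hno, hroot⟩ := hit_elem (K := K) y hy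
    refine ⟨⟨z • y, h.map (mapRingHom (Int.castRingHom ℚ)), hm.map _, hroot⟩, h, A, B, D, ?_, hm, hD, hAB, hno, hroot⟩
    intro σ hσ
    change σ (z • y) = z • y
    rw [map_smul]
    congr 1
    exact (IntermediateField.mem_fixedField_iff H y).1 hyH σ hσ
  choose c h A B D hfix hm hD hAB hno hroot using key
  obtain ⟨a, hda, ha⟩ := hit_main h A B D hm hD hAB hno d hd
  refine ⟨a, hda, ?_⟩
  obtain ⟨N, iN, iA, π, H, S, hgal, hfin, hπ, hS, hSπ⟩ :=
    hit_residue (B := integralClosure ℚ[X] L) Gal(L/K) (a : ℚ)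
  have hH : H = ⊤ := by
    by_contra hH
    set i : {H : Subgroup Gal(L/K) // H ≠ ⊤} := ⟨H, hH⟩
    have h1 : ∀ τ : Gal(N/ℚ), τ (π (c i)) = π (c i) := by
      intro τ
      obtain ⟨σ, rfl⟩ := hS τ
      rw [hSπ]
      congr 1
      apply Subtype.ext
      rw [hact]
      exact hfix i σ σ.2
    obtain ⟨r, hr⟩ := (IsGalois.mem_range_algebraMap_iff_fixed (F := ℚ) (π (c i))).2 h1
    have h2 : ((h i).map (mapRingHom (Int.castRingHom ℚ))).eval₂ (algebraMap ℚ[X] (integralClosure ℚ[X] L)) (c i) = 0 := by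
      apply Subtype.ext
      have := hroot i
      rw [aeval_def] at this
      refine Eq.trans ?_ this
      exact Polynomial.hom_eval₂ _ _ (integralClosure ℚ[X] L).val.toRingHom _
    have h3 := congrArg π h2
    rw [Polynomial.hom_eval₂, map_zero, ← hr] at h3
    have e1 : π.comp (algebraMap ℚ[X] (integralClosure ℚ[X] L)) =
        (algebraMap ℚ N).comp (evalRingHom (a : ℚ)) := RingHom.ext hπ
    rw [e1, ← Polynomial.hom_eval₂, ← eval_map, Polynomial.map_map] at h3
    have h4 := (algebraMap ℚ N).injective (h3.trans (map_zero _).symm)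
    have e2 : (evalRingHom (a : ℚ)).comp (mapRingHom (Int.castRingHom ℚ)) =
        (Int.castRingHom ℚ).comp (evalRingHom a) := by
      ext <;> simp
    rw [e2, ← Polynomial.map_map] at h4
    have h5 : IsIntegral ℤ r := ⟨(h i).map (evalRingHom a), (hm i).map _, by
      rw [← eval_map]; exact h4⟩
    obtain ⟨x, rfl⟩ := IsIntegrallyClosed.isIntegral_iff.1 h5
    apply ha i x
    have h6 : ((((h i).map (evalRingHom a)).eval x : ℤ) : ℚ) = 0 := by
      rw [← h4]; exact (eval_map_apply (f := Int.castRingHom ℚ) x).symm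
    exact_mod_cast h6
  subst hH
  refine ⟨N, iN, iA, π, S.comp Subgroup.topEquiv.symm.toMonoidHom, hgal, hfin, hπ, ?_, ?_⟩
  · exact hS.comp Subgroup.topEquiv.symm.surjective
  · intro σ b b' hb
    change S (Subgroup.topEquiv.symm σ) (π b) = _
    rw [hSπ]
    congr 1
    apply Subtype.ext
    rw [hact, hb]
    rfl

theorem hit_final {K L : Type} [Field K] [Algebra ℚ[X] K] [IsFractionRing ℚ[X] K]
    [Field L] [Algebra K L] [Algebra ℚ[X] L] [IsScalarTower ℚ[X] K L]
    [FiniteDimensional K L] [IsGalois K L] (f : ℚ[X][X]) (hmon : f.Monic)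
    (hirr : Irreducible (f.map (algebraMap ℚ[X] K)))
    (hsep : (f.map (algebraMap ℚ[X] K)).Separable)
    (hsplit : (f.map (algebraMap ℚ[X] L)).Splits)
    (hext : ∀ σ : Gal(L/K), (∀ x ∈ (f.map (algebraMap ℚ[X] L)).roots, σ x = x) → σ = 1) :
    ∃ a : ℚ, Irreducible (f.map (evalRingHom a)) ∧
      Nonempty ((f.map (evalRingHom a)).Gal ≃* Gal(L/K)) := by
  obtain ⟨A1, B1, d, hd, hAB⟩ := hit_bezout (K := K) f hsep
  obtain ⟨a, hda, N, iN, iA, π, S, hgal, hfin, hπ, hS, hSπ⟩ := hit_choose (K := K) (L := L) d hd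
  refine ⟨a, ?_⟩
  have hmonL := hmon.map (algebraMap ℚ[X] L)
  have e1 : π.comp (algebraMap ℚ[X] (integralClosure ℚ[X] L)) = (algebraMap ℚ N).comp (evalRingHom a) := RingHom.ext hπ
  have e3 : (algebraMap (integralClosure ℚ[X] L) L).comp (algebraMap ℚ[X] (integralClosure ℚ[X] L)) = algebraMap ℚ[X] L := rfl
  have hBL : Function.Injective (algebraMap (integralClosure ℚ[X] L) L) := Subtype.val_injective
  -- the roots
  have hrint : ∀ x ∈ (f.map (algebraMap ℚ[X] L)).roots, x ∈ integralClosure ℚ[X] L := by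
    intro x hx
    refine ⟨f, hmon, ?_⟩
    rw [← eval_map]
    exact (mem_roots'.1 hx).2
  obtain ⟨t, ht⟩ : ∃ t : Multiset (integralClosure ℚ[X] L), t.map (algebraMap (integralClosure ℚ[X] L) L) = (f.map (algebraMap ℚ[X] L)).roots := by
    refine ⟨(f.map (algebraMap ℚ[X] L)).roots.pmap (fun x hx => ⟨x, hx⟩) hrint, ?_⟩
    rw [Multiset.map_pmap]
    exact (Multiset.pmap_eq_map _ _ _ hrint).trans (Multiset.map_id _)
  have hfB : f.map (algebraMap ℚ[X] (integralClosure ℚ[X] L)) = (t.map (fun b => X - C b)).prod := by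
    apply map_injective (algebraMap (integralClosure ℚ[X] L) L) hBL
    rw [Polynomial.map_map, e3, hsplit.eq_prod_roots_of_monic hmonL, ← ht,
      Polynomial.map_multiset_prod, Multiset.map_map, Multiset.map_map]
    congr 1
    apply Multiset.map_congr rfl
    intro x _
    simp
  set fa := f.map (evalRingHom a) with hfa
  have hfamon : fa.Monic := hmon.map _
  have hfaN : fa.map (algebraMap ℚ N) = (f.map (algebraMap ℚ[X] (integralClosure ℚ[X] L))).map π := by
    rw [hfa, Polynomial.map_map, Polynomial.map_map, e1]
  have hfaN' : fa.map (algebraMap ℚ N) = ((t.map π).map (fun b => X - C b)).prod := by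
    rw [hfaN, hfB, Polynomial.map_multiset_prod, Multiset.map_map, Multiset.map_map]
    congr 1
    apply Multiset.map_congr rfl
    intro x _
    simp
  have hroots : (fa.map (algebraMap ℚ N)).roots = t.map π := by
    rw [hfaN', roots_multiset_prod_X_sub_C]
  have hfasplit : (fa.map (algebraMap ℚ N)).Splits := by
    rw [hfaN']
    apply Splits.multisetProd
    intro p hp
    obtain ⟨b, _, rfl⟩ := Multiset.mem_map.1 hp
    exact Splits.X_sub_C _
  have hfasep : fa.Separable := by
    have h1 := congrArg (Polynomial.map (evalRingHom a)) hAB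
    simp only [Polynomial.map_add, Polynomial.map_mul, map_C, ← derivative_map,
      coe_evalRingHom] at h1
    refine ⟨C (d.eval a)⁻¹ * A1.map (evalRingHom a), C (d.eval a)⁻¹ * B1.map (evalRingHom a), ?_⟩
    have h2 : (C (d.eval a)⁻¹ : ℚ[X]) * C (d.eval a) = 1 := by
      rw [← C_mul, inv_mul_cancel₀ hda, C_1]
    rw [← h2, ← h1]; ring
  have hnodup : (fa.map (algebraMap ℚ N)).roots.Nodup := nodup_roots hfasep.map
  have htL : ∀ b ∈ t, (b : L) ∈ (f.map (algebraMap ℚ[X] L)).roots := by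
    intro b hb
    rw [← ht]
    exact Multiset.mem_map_of_mem (algebraMap (integralClosure ℚ[X] L) L) hb
  have htroot : ∀ b ∈ t, (f.map (algebraMap ℚ[X] (integralClosure ℚ[X] L))).eval b = 0 := by
    intro b hb
    apply hBL
    rw [map_zero, ← eval_map_apply, Polynomial.map_map]
    exact (mem_roots'.1 (htL b hb)).2
  have hσt : ∀ (σ : Gal(L/K)), ∀ b ∈ t, ∃ b' ∈ t, (b' : L) = σ b := by
    intro σ b hb
    have h1 : σ (b : L) ∈ (f.map (algebraMap ℚ[X] L)).roots := by
      have h2 := (mem_roots'.1 (htL b hb)).2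
      rw [mem_roots hmonL.ne_zero]
      rw [IsScalarTower.algebraMap_eq ℚ[X] K L, ← Polynomial.map_map] at h2 ⊢
      rw [IsRoot, eval_map_algebraMap] at h2 ⊢
      rw [← AlgEquiv.coe_toAlgHom, aeval_algHom_apply, h2, map_zero]
    rw [← ht] at h1
    obtain ⟨b', hb', h⟩ := Multiset.mem_map.1 h1
    exact ⟨b', hb', h⟩
  have hKroot : ∀ b ∈ t, minpoly K (b : L) = f.map (algebraMap ℚ[X] K) := by
    intro b hb
    symm
    apply minpoly.eq_of_irreducible_of_monic hirr _ (hmon.map _)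
    have h2 := (mem_roots'.1 (htL b hb)).2
    rw [IsScalarTower.algebraMap_eq ℚ[X] K L, ← Polynomial.map_map, IsRoot,
      eval_map_algebraMap] at h2
    exact h2
  constructor
  · -- irreducibility
    obtain ⟨b, hb⟩ : ∃ b, b ∈ t := by
      apply Multiset.exists_mem_of_ne_zero
      rintro rfl
      have h1 := hirr.natDegree_pos
      rw [Multiset.map_zero, Multiset.prod_zero] at hfB
      have h2 := congrArg natDegree hfB
      rw [hmon.natDegree_map, natDegree_one] at h2
      rw [hmon.natDegree_map] at h1
      omega
    have hintg : IsIntegral ℚ (π b) := Algebra.IsIntegral.isIntegral _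
    have hbroot : ∀ c ∈ t, aeval (π c) fa = 0 := by
      intro c hc
      rw [← eval_map_algebraMap, hfaN, eval_map_apply, htroot c hc, map_zero]
    have h1 : minpoly ℚ (π b) ∣ fa := minpoly.dvd _ _ (hbroot b hb)
    have h2 : fa ∣ minpoly ℚ (π b) := by
      rw [← map_dvd_map' (algebraMap ℚ N), hfasplit.eq_prod_roots_of_monic (hfamon.map _),
        Multiset.prod_X_sub_C_dvd_iff_le_roots
          (((minpoly.monic hintg).map _).ne_zero), Multiset.le_iff_subset hnodup]
      intro x hx
      rw [hroots] at hx
      obtain ⟨c, hc, rfl⟩ := Multiset.mem_map.1 hx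
      have h3 : IsConjRoot K (c : L) (b : L) := by
        rw [IsConjRoot, hKroot b hb, hKroot c hc]
      obtain ⟨σ, hσ⟩ := isConjRoot_iff_exists_algEquiv.1 h3
      have h4 : S σ (π b) = π c := hSπ σ b c hσ.symm
      rw [mem_roots ((minpoly.monic hintg).map _).ne_zero, IsRoot, eval_map_algebraMap, ← h4,
        ← AlgEquiv.coe_toAlgHom, aeval_algHom_apply, minpoly.aeval, map_zero]
    rw [eq_of_monic_of_associated hfamon (minpoly.monic hintg) (associated_of_dvd_dvd h2 h1)]
    exact minpoly.irreducible hintg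
  · have hfact : Fact ((fa.map (algebraMap ℚ N)).Splits) := ⟨hfasplit⟩
    let φ : Gal(L/K) →* fa.Gal := (Gal.restrict fa N).comp S
    have hsurj : Function.Surjective φ := (Gal.restrict_surjective fa N).comp hS
    have hinj : Function.Injective φ := by
      rw [injective_iff_map_eq_one]
      intro σ hσ
      have hfix : ∀ b ∈ t, S σ (π b) = π b := by
        intro b hb
        have h1 : π b ∈ fa.rootSet N := by
          rw [mem_rootSet']
          refine ⟨(hfamon.map _).ne_zero, ?_⟩
          rw [← eval_map_algebraMap, hfaN, eval_map_apply, htroot b hb, map_zero]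
        have h2 := Gal.restrict_smul (p := fa) (S σ) ⟨π b, h1⟩
        rw [← h2]
        change ((φ σ • (⟨π b, h1⟩ : fa.rootSet N) : fa.rootSet N) : N) = π b
        rw [hσ, one_smul]
      apply hext
      intro x hx
      rw [← ht] at hx
      obtain ⟨b, hb, rfl⟩ := Multiset.mem_map.1 hx
      obtain ⟨b', hb', hbb'⟩ := hσt σ b hb
      have h1 : π b' = π b := by rw [← hSπ σ b b' hbb', hfix b hb]
      have h2 : b' = b := by
        exact Multiset.inj_on_of_nodup_map (hroots ▸ hnodup) b' hb' b hb h1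
      change σ (b : L) = b
      rw [← hbb', h2]
    exact ⟨(MulEquiv.ofBijective φ ⟨hinj, hsurj⟩).symm⟩

/-- Let `f ∈ ℚ[t][X]` be, regarded as a polynomial in `X` over `ℚ(t)`, monic, irreducible
and separable. Then there is `a ∈ ℚ` such that the specialization `f(a, X) ∈ ℚ[X]` is
irreducible over `ℚ` and its Galois group over `ℚ` is isomorphic to the Galois group of
`f` over `ℚ(t)`. -/
theorem galoisGroup_specialization (f : Polynomial (Polynomial ℚ))
    (hmonic : (f.map (algebraMap (Polynomial ℚ) (RatFunc ℚ))).Monic)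
    (hirr : Irreducible (f.map (algebraMap (Polynomial ℚ) (RatFunc ℚ))))
    (hsep : (f.map (algebraMap (Polynomial ℚ) (RatFunc ℚ))).Separable) :
    ∃ a : ℚ, Irreducible (f.map (Polynomial.evalRingHom a)) ∧
      Nonempty ((f.map (Polynomial.evalRingHom a)).Gal ≃*
        (f.map (algebraMap (Polynomial ℚ) (RatFunc ℚ))).Gal) := by

  have hinj : Function.Injective (algebraMap ℚ[X] (RatFunc ℚ)) := IsFractionRing.injective _ _
  have hmon : f.Monic := Function.Injective.monic_map_iff hinj |>.2 hmonic
  set g := f.map (algebraMap (Polynomial ℚ) (RatFunc ℚ)) with hg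
  have hgal : IsGalois (RatFunc ℚ) g.SplittingField := IsGalois.of_separable_splitting_field hsep
  have e : f.map (algebraMap ℚ[X] g.SplittingField) = g.map (algebraMap (RatFunc ℚ) g.SplittingField) := by
    rw [hg, Polynomial.map_map, ← IsScalarTower.algebraMap_eq]
  refine hit_final (K := RatFunc ℚ) (L := g.SplittingField) f hmon hirr hsep ?_ ?_
  · rw [e]; exact SplittingField.splits g
  · intro σ hσ
    apply Gal.ext
    intro x hx
    rw [e] at hσ
    refine hσ x ?_
    rw [mem_rootSet'] at hx
    rw [mem_roots hx.1, IsRoot, eval_map_algebraMap]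
    exact hx.2
end

section
/- Let G be a finite group. If G occurs as a Galois group over the rational function field ℚ(t), i.e. there exists a finite Galois extension N/ℚ(t) with Gal(N/ℚ(t)) isomorphic to G, then G occurs as a Galois group over ℚ, i.e. there exists a finite Galois extension M/ℚ with Gal(M/ℚ) isomorphic to G. -/
open Polynomial Filter Topology

namespace HIT

theorem rolle_iter (f : ℕ → ℝ → ℝ) (A : ℝ) (M : ℕ)
    (hf : ∀ i < M, ∀ x ≥ A, HasDerivAt (f i) (f (i+1) x) x) :
    ∀ (m i : ℕ) (x : ℕ → ℝ), i + m ≤ M → (∀ j < m, x j < x (j+1)) → A ≤ x 0 →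
      (∀ j ≤ m, f i (x j) = 0) → ∃ ξ ≥ A, f (i+m) ξ = 0 := by
  intro m
  induction m with
  | zero => intro i x _ _ h0 h; exact ⟨x 0, h0, h 0 le_rfl⟩
  | succ m ih =>
    intro i x hM hx h0 h
    have hA : ∀ j ≤ m + 1, A ≤ x j := by
      intro j
      induction j with
      | zero => intro _; exact h0
      | succ j ihj => intro hj; exact (ihj (by omega)).trans (hx j (by omega)).le
    have key : ∀ j, ∃ y, j ≤ m → (x j < y ∧ y < x (j+1) ∧ f (i+1) y = 0) := by
      intro j
      by_cases hj : j ≤ m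
      · obtain ⟨c, hc, hc'⟩ := exists_hasDerivAt_eq_zero (f := f i) (f' := f (i+1)) (hx j (by omega))
          (fun y hy => (hf i (by omega) y ((hA j (by omega)).trans hy.1)).continuousAt.continuousWithinAt)
          ((h j (by omega)).trans (h (j+1) (by omega)).symm)
          (fun y hy => hf i (by omega) y ((hA j (by omega)).trans hy.1.le))
        exact ⟨c, fun _ => ⟨hc.1, hc.2, hc'⟩⟩
      · exact ⟨0, fun h => absurd h hj⟩
    choose y hy using key
    obtain ⟨ξ, h1, h2⟩ := ih (i+1) y (by omega)
      (fun j hj => (hy j (by omega)).2.1.trans (hy (j+1) (by omega)).1)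
      (h0.trans (hy 0 (by omega)).1.le) (fun j hj => (hy j hj).2.2)
    exact ⟨ξ, h1, by rw [← h2]; congr 1; omega⟩

/-- functions of the shape `s^{-(e+1)} β(1/s)` near infinity -/
def Tail (R : ℝ → ℝ) : Prop := ∃ (e : ℕ) (β : ℝ → ℝ), AnalyticAt ℝ β 0 ∧ β 0 ≠ 0 ∧
  ∀ᶠ s in atTop, R s = (s⁻¹) ^ (e+1) * β s⁻¹

theorem ev_inv {p : ℝ → Prop} (h : ∀ᶠ u in 𝓝 0, p u) : ∀ᶠ s : ℝ in atTop, p s⁻¹ :=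
  tendsto_inv_atTop_zero.eventually h

theorem ev_atTop_nhds {p : ℝ → Prop} (h : ∀ᶠ s in atTop, p s) :
    ∀ᶠ s in atTop, ∀ᶠ x in 𝓝 s, p x := by
  obtain ⟨A, hA⟩ := eventually_atTop.1 h
  filter_upwards [eventually_gt_atTop A] with s hs
  filter_upwards [lt_mem_nhds hs] with x hx using hA x hx.le

theorem Tail.deriv_diff {R : ℝ → ℝ} (h : Tail R) :
    Tail (deriv R) ∧ ∀ᶠ s in atTop, DifferentiableAt ℝ R s := by
  obtain ⟨e, β, hβ, h0, hR⟩ := h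
  have key : ∀ᶠ s in atTop, HasDerivAt R
      ((s⁻¹) ^ (e+1+1) * (fun u => -((e+1) * β u + u * deriv β u)) s⁻¹) s := by
    filter_upwards [ev_atTop_nhds hR, eventually_gt_atTop 0, ev_inv hβ.eventually_analyticAt]
      with s hs hs0 hs1
    have h1 : HasDerivAt (fun s : ℝ => s⁻¹) (-(s^2)⁻¹) s := hasDerivAt_inv hs0.ne'
    have h2 := (h1.pow (e+1)).mul (hs1.differentiableAt.hasDerivAt.comp s h1)
    refine (h2.congr_of_eventuallyEq hs).congr_deriv ?_
    simp
    field_simp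
    ring
  constructor
  · refine ⟨e+1, fun u => -((e+1) * β u + u * deriv β u), ?_, ?_, ?_⟩
    · have := hβ.deriv
      fun_prop
    · simp [h0]; positivity
    · filter_upwards [key] with s hs using hs.deriv
  · filter_upwards [key] with s hs using hs.differentiableAt

theorem Tail.iter {R : ℝ → ℝ} (h : Tail R) (i : ℕ) : Tail (deriv^[i] R) := by
  induction i with
  | zero => exact h
  | succ i ih => rw [Function.iterate_succ_apply']; exact ih.deriv_diff.1

theorem Tail.tendsto {R : ℝ → ℝ} (h : Tail R) : Tendsto R atTop (𝓝 0) := by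
  obtain ⟨e, β, hβ, h0, hR⟩ := h
  have : Tendsto (fun u : ℝ => u ^ (e+1) * β u) (𝓝 0) (𝓝 (0 ^ (e+1) * β 0)) := by
    have := hβ.continuousAt
    exact ContinuousAt.tendsto (x := (0:ℝ)) (f := fun u : ℝ => u ^ (e+1) * β u) (by fun_prop)
  rw [zero_pow (by omega), zero_mul] at this
  exact (this.comp tendsto_inv_atTop_zero).congr' (by filter_upwards [hR] with s hs using hs.symm)

theorem Tail.ne_zero {R : ℝ → ℝ} (h : Tail R) : ∀ᶠ s in atTop, R s ≠ 0 := by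
  obtain ⟨e, β, hβ, h0, hR⟩ := h
  filter_upwards [hR, ev_inv (hβ.continuousAt.eventually_ne h0), eventually_gt_atTop 0]
    with s hs h1 h2
  rw [hs]
  positivity

open Classical in
/-- Sparse sets of naturals. -/
def Sparse (B : Set ℕ) : Prop := ∃ m : ℕ, ∀ L : ℕ, ∀ᶠ n in atTop,
  ((Finset.Ico n (n+L)).filter (· ∈ B)).card ≤ m

theorem Sparse.union {B C : Set ℕ} (hB : Sparse B) (hC : Sparse C) : Sparse (B ∪ C) := by
  classical
  obtain ⟨m, hm⟩ := hB
  obtain ⟨k, hk⟩ := hC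
  refine ⟨m + k, fun L => ?_⟩
  filter_upwards [hm L, hk L] with n h1 h2
  refine le_trans (le_trans (Finset.card_le_card ?_) (Finset.card_union_le _ _)) (add_le_add h1 h2)
  intro x
  simp only [Finset.mem_filter, Finset.mem_union, Set.mem_union]
  tauto

theorem Sparse.mono {B C : Set ℕ} (hB : Sparse B) (h : ∀ᶠ n in atTop, n ∈ C → n ∈ B) :
    Sparse C := by
  classical
  obtain ⟨m, hm⟩ := hB
  obtain ⟨A, hA⟩ := eventually_atTop.1 h
  refine ⟨m, fun L => ?_⟩
  filter_upwards [hm L, eventually_ge_atTop A] with n h1 h2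
  refine (Finset.card_le_card ?_).trans h1
  intro x
  simp only [Finset.mem_filter, Finset.mem_Ico]
  exact fun hx => ⟨hx.1, hA x (h2.trans hx.1.1) hx.2⟩

theorem sparse_empty : Sparse ∅ := ⟨0, fun L => by simp⟩

theorem sparse_biUnion {ι : Type*} (S : Finset ι) (B : ι → Set ℕ) (h : ∀ i ∈ S, Sparse (B i)) :
    Sparse (⋃ i ∈ S, B i) := by
  classical
  induction S using Finset.induction_on with
  | empty => simpa using sparse_empty
  | insert a S ha ih =>
    rw [Finset.set_biUnion_insert]
    exact (h a (by simp)).union (ih fun i hi => h i (by simp [hi]))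

theorem Sparse.exists_notMem {B : Set ℕ} (hB : Sparse B) (A : ℕ) : ∃ n ≥ A, n ∉ B := by
  classical
  obtain ⟨m, hm⟩ := hB
  obtain ⟨n, h1, h2⟩ := ((hm (m+1)).and (eventually_ge_atTop A)).exists
  by_contra! hc
  rw [Finset.filter_true_of_mem] at h1
  · simp at h1
  · intro x hx
    exact hc x (h2.trans (Finset.mem_Ico.1 hx).1)

theorem sparse_of_tail (P : ℝ[X]) (R : ℝ → ℝ) (hR : Tail R) :
    Sparse {n : ℕ | ∃ z : ℤ, P.eval (n : ℝ) + R n = z} := by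
  classical
  set m := P.natDegree + 1 with hm
  refine ⟨m, fun L => ?_⟩
  have e1 : ∀ᶠ s in atTop, ∀ i < m, DifferentiableAt ℝ (deriv^[i] R) s := by
    have : ∀ᶠ s in atTop, ∀ i ∈ Finset.range m, DifferentiableAt ℝ (deriv^[i] R) s :=
      (Filter.eventually_all_finset _).2 fun i _ => (hR.iter i).deriv_diff.2
    simpa using this
  have e2 := (hR.iter m).ne_zero
  have e3 : ∀ᶠ s in atTop, |((L.factorial : ℝ)^m) * deriv^[m] R s| < 1 := by
    have := ((hR.iter m).tendsto.const_mul ((L.factorial : ℝ)^m)).abs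
    rw [mul_zero, abs_zero] at this
    exact this.eventually_lt_const one_pos
  obtain ⟨A, hA⟩ := eventually_atTop.1 (e1.and (e2.and e3))
  filter_upwards [eventually_ge_atTop ⌈A⌉₊] with n hn
  by_contra! hcard
  obtain ⟨T, hT, hTc⟩ := Finset.exists_subset_card_eq (Nat.succ_le_of_lt hcard)
  have hTmem : ∀ t ∈ T, (n ≤ t ∧ t < n + L) ∧ ∃ z : ℤ, P.eval (t : ℝ) + R t = z := by
    intro t ht
    simpa using hT ht
  have hz : ∀ t, ∃ z : ℤ, t ∈ T → P.eval (t : ℝ) + R t = z := by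
    intro t
    by_cases ht : t ∈ T
    · obtain ⟨z, hz⟩ := (hTmem t ht).2; exact ⟨z, fun _ => hz⟩
    · exact ⟨0, fun h => absurd h ht⟩
  choose z hz using hz
  have hinj : Set.InjOn (fun t : ℕ => (t : ℝ)) T := fun a _ b _ h => by simpa using h
  set Q := Lagrange.interpolate T (fun t : ℕ => (t : ℝ)) (fun t => (z t : ℝ)) with hQ
  have hQd : Q.degree < T.card := Lagrange.degree_interpolate_lt _ hinj
  have hQe : ∀ t ∈ T, Q.eval (t : ℝ) = z t := fun t ht =>
    Lagrange.eval_interpolate_at_node _ hinj ht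
  have hQc := Lagrange.coeff_eq_sum hinj hQd
  have hQcint : ∃ w : ℤ, (L.factorial : ℝ)^m * Q.coeff m = w := by
    rw [show T.card - 1 = m by omega] at hQc
    rw [hQc, Finset.mul_sum]
    have : ∀ i ∈ T, ∃ w : ℤ, (L.factorial : ℝ)^m * (Q.eval (i:ℝ) / ∏ j ∈ T.erase i, ((i:ℝ) - j)) = w := by
      intro i hi
      have hd : (∏ j ∈ T.erase i, ((i:ℤ) - j)) ∣ (L.factorial : ℤ)^m := by
        have : (L.factorial : ℤ)^m = ∏ j ∈ T.erase i, (L.factorial : ℤ) := by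
          rw [Finset.prod_const, Finset.card_erase_of_mem hi, hTc]; simp
        rw [this]
        apply Finset.prod_dvd_prod_of_dvd
        intro j hj
        have hj' := Finset.mem_erase.1 hj
        have h1 := (hTmem i hi).1
        have h2 := (hTmem j hj'.2).1
        rw [← Int.natAbs_dvd_natAbs, Int.natAbs_natCast]
        apply Nat.dvd_factorial <;> omega
      obtain ⟨c, hc⟩ := hd
      have hc' : (L.factorial : ℝ)^m = (∏ j ∈ T.erase i, ((i:ℝ) - j)) * c := by exact_mod_cast hc
      have hne : (∏ j ∈ T.erase i, ((i:ℝ) - j)) ≠ 0 := by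
        rw [Finset.prod_ne_zero_iff]
        intro j hj
        have := Finset.mem_erase.1 hj
        rw [sub_ne_zero]
        exact_mod_cast this.1.symm
      refine ⟨c * z i, ?_⟩
      rw [hc', hQe i hi]
      field_simp
      push_cast; ring
    choose! w hw using this
    refine ⟨∑ i ∈ T, w i, ?_⟩
    push_cast
    exact Finset.sum_congr rfl hw
  obtain ⟨w, hw⟩ := hQcint
  let W := P - Q
  have hWd : W.natDegree ≤ m := by
    refine (natDegree_sub_le _ _).trans (max_le (by omega) ?_)
    exact natDegree_le_of_degree_le (Order.le_of_lt_succ (by rw [hTc] at hQd; exact_mod_cast hQd))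
  obtain ⟨ξ, hξ, h0⟩ := rolle_iter (fun i x => deriv^[i] R x + (derivative^[i] W).eval x) A m
    (by
      intro i hi x hx
      have h1 := ((hA x hx).1 i hi).hasDerivAt
      have h2 := (derivative^[i] W).hasDerivAt x
      simp only [Function.iterate_succ_apply']
      exact h1.add h2) m 0
      (fun j => if h : j < m + 1 then (T.orderEmbOfFin hTc ⟨j, h⟩ : ℝ) else 0)
      (by omega)
      (by
        intro j hj
        rw [dif_pos (by omega), dif_pos (by omega)]
        norm_cast
        apply (T.orderEmbOfFin hTc).strictMono
        simp)
      (by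
        rw [dif_pos (by omega)]
        have := (hTmem _ (T.orderEmbOfFin_mem hTc ⟨0, by omega⟩)).1.1
        exact (Nat.ceil_le.1 hn).trans (by exact_mod_cast this))
      (by
        intro j hj
        rw [dif_pos (by omega)]
        have h1 := T.orderEmbOfFin_mem hTc ⟨j, by omega⟩
        have h2 := hz _ h1
        have h3 := hQe _ h1
        simp only [Function.iterate_zero_apply, W, eval_sub, h3]
        linarith)
  rw [zero_add] at h0
  have hWc : (derivative^[m] W).eval ξ = -(m.factorial * Q.coeff m) := by
    have hd0 : (derivative^[m] W).natDegree = 0 := by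
      have := natDegree_iterate_derivative W m
      omega
    rw [eq_C_of_natDegree_eq_zero hd0, eval_C, coeff_iterate_derivative]
    simp [W, coeff_eq_zero_of_natDegree_lt (show P.natDegree < m by omega),
      Nat.descFactorial_self]
  rw [hWc] at h0
  have hb := (hA ξ hξ).2
  have heq : ((L.factorial : ℝ)^m) * deriv^[m] R ξ = ((m.factorial * w : ℤ) : ℝ) := by
    push_cast
    rw [← hw]
    linear_combination ((L.factorial : ℝ)^m) * h0
  have hlt := hb.2
  rw [heq] at hlt
  have hz0 : (m.factorial * w : ℤ) = 0 := by
    rw [← Int.abs_lt_one_iff]; exact_mod_cast hlt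
  rw [hz0] at heq
  have := hb.1
  have : (L.factorial : ℝ)^m ≠ 0 := by positivity
  simp_all

end HIT
open Polynomial Filter Topology

namespace HIT

theorem taylor {f : ℝ → ℝ} (hf : AnalyticAt ℝ f 0) (k : ℕ) :
    ∃ (c : ℕ → ℝ) (γ : ℝ → ℝ), AnalyticAt ℝ γ 0 ∧
      ∀ᶠ u in 𝓝 (0:ℝ), f u = (∑ j ∈ Finset.range k, c j * u ^ j) + u ^ k * γ u := by
  induction k with
  | zero => exact ⟨0, f, hf, by simp⟩
  | succ k ih =>
    obtain ⟨c, γ, hγ, h⟩ := ih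
    have h1 : ∃ δ : ℝ → ℝ, AnalyticAt ℝ δ 0 ∧ ∀ᶠ u in 𝓝 (0:ℝ), γ u - γ 0 = u * δ u := by
      have ha : AnalyticAt ℝ (fun u => γ u - γ 0) 0 := by fun_prop
      by_cases h0 : ∀ᶠ u in 𝓝 (0:ℝ), γ u - γ 0 = 0
      · exact ⟨0, analyticAt_const, by filter_upwards [h0] with u hu; simp [hu]⟩
      · obtain ⟨n, g, hg, hg0, hn⟩ := ha.exists_eventuallyEq_pow_smul_nonzero_iff.2 h0
        have hn0 : n ≠ 0 := by
          rintro rfl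
          have := hn.self_of_nhds
          simp at this
          exact hg0 this.symm
        obtain ⟨n, rfl⟩ := Nat.exists_eq_succ_of_ne_zero hn0
        refine ⟨fun u => u ^ n * g u, by fun_prop, ?_⟩
        filter_upwards [hn] with u hu
        rw [hu]; simp; ring
    obtain ⟨δ, hδ, h2⟩ := h1
    refine ⟨fun j => if j = k then γ 0 else c j, δ, hδ, ?_⟩
    filter_upwards [h, h2] with u hu hu2
    have hsum : ∑ j ∈ Finset.range k, (if j = k then γ 0 else c j) * u ^ j =
        ∑ j ∈ Finset.range k, c j * u ^ j := by
      apply Finset.sum_congr rfl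
      intro j hj
      have := Finset.mem_range.1 hj
      rw [if_neg (by omega)]
    rw [hu, Finset.sum_range_succ, hsum]
    simp only [if_true]
    linear_combination u ^ k * hu2

theorem branch_dichotomy {α : ℝ → ℝ} (hα : AnalyticAt ℝ α 0) (k : ℕ) (D : ℝ) (hD : D ≠ 0) :
    Sparse {n : ℕ | ∃ z : ℤ, D * n ^ k * α ((n:ℝ)⁻¹) = z} ∨
    ∃ T : ℝ[X], ∀ᶠ u in 𝓝 (0:ℝ), α u = T.eval u := by
  obtain ⟨c, γ, hγ, h⟩ := taylor hα (k+1)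
  by_cases h0 : ∀ᶠ u in 𝓝 (0:ℝ), γ u = 0
  · right
    refine ⟨∑ j ∈ Finset.range (k+1), C (c j) * X ^ j, ?_⟩
    filter_upwards [h, h0] with u hu hu0
    rw [hu, hu0]
    simp [eval_finsetSum]
  · left
    obtain ⟨r, β, hβ, hβ0, hr⟩ := hγ.exists_eventuallyEq_pow_smul_nonzero_iff.2 h0
    have hT : Tail (fun s => (s⁻¹)^(r+1) * (D * β s⁻¹)) :=
      ⟨r, fun u => D * β u, by fun_prop, mul_ne_zero hD hβ0, by simp⟩
    refine (sparse_of_tail (∑ j ∈ Finset.range (k+1), C (D * c j) * X ^ (k - j)) _ hT).mono ?_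
    filter_upwards [tendsto_natCast_atTop_atTop.eventually (ev_inv h),
      tendsto_natCast_atTop_atTop.eventually (ev_inv hr), eventually_gt_atTop 0] with n h1 h2 h3
    rintro ⟨z, hz⟩
    refine ⟨z, ?_⟩
    have hn : (n:ℝ) ≠ 0 := by positivity
    rw [← hz, h1, h2, mul_add, Finset.mul_sum, eval_finsetSum]
    congr 1
    · apply Finset.sum_congr rfl
      intro j hj
      have : j ≤ k := by have := Finset.mem_range.1 hj; omega
      obtain ⟨l, rfl⟩ := Nat.exists_eq_add_of_le this
      simp only [eval_mul, eval_C, eval_pow, eval_X, Nat.add_sub_cancel_left, inv_pow]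
      field_simp
      ring
    · simp
      field_simp
      ring

theorem rational_poly (T : ℝ[X]) (S : Set ℚ) (hS : S.Infinite)
    (h : ∀ q ∈ S, ∃ y : ℚ, T.eval (q:ℝ) = y) : ∃ A : ℚ[X], T = A.map (algebraMap ℚ ℝ) := by
  classical
  obtain ⟨s, hs, hc⟩ := hS.exists_subset_card_eq (T.natDegree + 1)
  choose! y hy using h
  have hinj : Set.InjOn (fun q : ℚ => q) s := fun _ _ _ _ h => h
  have hinj' : Set.InjOn (fun q : ℚ => (q:ℝ)) s := fun _ _ _ _ h => by simpa using h
  refine ⟨Lagrange.interpolate s (fun q => q) y, ?_⟩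
  apply Polynomial.eq_of_degrees_lt_of_eval_index_eq (s := s) (v := fun q : ℚ => (q:ℝ)) hinj'
  · rw [hc]
    exact degree_le_natDegree.trans_lt (by exact_mod_cast Nat.lt_succ_self _)
  · rw [degree_map]
    exact Lagrange.degree_interpolate_lt _ hinj
  · intro q hq
    have := Lagrange.eval_interpolate_at_node y hinj hq
    rw [hy q (hs hq), ← eq_ratCast (algebraMap ℚ ℝ) q, eval_map_apply, this]
    simp

/-- evaluation of a rational polynomial at a real number -/
noncomputable def ev (t : ℝ) : ℚ[X] →+* ℝ := eval₂RingHom (algebraMap ℚ ℝ) t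

theorem ev_rat (t : ℚ) (q : ℚ[X]) : ev t q = ((q.eval t : ℚ) : ℝ) := by
  simp only [ev, coe_eval₂RingHom]
  rw [← eq_ratCast (algebraMap ℚ ℝ) t, eval₂_hom]
  simp

/-- two-variable evaluation -/
noncomputable def FR (g : ℚ[X][X]) (p : ℝ × ℝ) : ℝ := (g.map (ev p.1)).eval p.2

theorem FR_rat (g : ℚ[X][X]) (t y : ℚ) :
    FR g (t, y) = (((g.map (evalRingHom t)).eval y : ℚ) : ℝ) := by
  have : ev (t:ℝ) = (algebraMap ℚ ℝ).comp (evalRingHom t) := by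
    ext q <;> simp [ev_rat]
  simp only [FR]
  rw [this, ← Polynomial.map_map, ← eq_ratCast (algebraMap ℚ ℝ) y, eval_map_apply]
  simp

open scoped ContDiff in
theorem FR_contDiff (g : ℚ[X][X]) : ContDiff ℝ ω (FR g) := by
  have : FR g = fun p => ∑ i ∈ Finset.range (g.natDegree + 1),
      (∑ j ∈ Finset.range ((g.coeff i).natDegree + 1),
        ((algebraMap ℚ ℝ) ((g.coeff i).coeff j)) * p.1 ^ j) * p.2 ^ i := by
    funext p
    rw [FR, eval_map, eval₂_eq_sum_range]
    refine Finset.sum_congr rfl fun i _ => ?_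
    rw [ev, coe_eval₂RingHom, eval₂_eq_sum_range]
  rw [this]
  fun_prop

open scoped ContDiff in
theorem implicit_branch (g : ℚ[X][X]) (a b : ℝ) (h0 : FR g (a, b) = 0)
    (h1 : FR (derivative g) (a, b) ≠ 0) :
    ∃ α : ℝ → ℝ, AnalyticAt ℝ α a ∧
      (∀ᶠ v in 𝓝 (a, b), FR g v = 0 ↔ α v.1 = v.2) := by
  have cd : ContDiffAt ℝ ω (FR g) (a, b) := (FR_contDiff g).contDiffAt
  have hd : HasFDerivAt (FR g) (fderiv ℝ (FR g) (a,b)) (a,b) :=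
    (cd.differentiableAt (by simp)).hasFDerivAt
  have hy : HasDerivAt (fun y => FR g (a, y)) (FR (derivative g) (a, b)) b := by
    simp only [FR]
    rw [← derivative_map]
    exact (g.map (ev a)).hasDerivAt b
  have hy2 : HasDerivAt (fun y => FR g (a, y)) (fderiv ℝ (FR g) (a,b) (0, 1)) b := by
    have h2 : HasDerivAt (fun y : ℝ => (a, y)) ((0:ℝ), (1:ℝ)) b :=
      (hasDerivAt_const b a).prodMk (hasDerivAt_id b)
    exact hd.comp_hasDerivAt b h2
  have heq := hy2.unique hy
  have hinv : (fderiv ℝ (FR g) (a,b) ∘L .inr ℝ ℝ ℝ).IsInvertible := by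
    refine ⟨ContinuousLinearEquiv.unitsEquivAut ℝ (Units.mk0 _ h1), ?_⟩
    ext
    simp [heq]
  refine ⟨cd.implicitFunction (by simp) hinv, ?_, ?_⟩
  · exact (cd.contDiffAt_implicitFunction (by simp) hinv).analyticAt
  · have := cd.eventually_apply_eq_iff_implicitFunction (by simp) hinv
    rwa [h0] at this

theorem denom_poly (a : ℚ) (q : ℚ[X]) : ∃ D k : ℕ, 0 < D ∧ ∀ n : ℕ, 0 < n →
    ∃ z : ℤ, (D * n ^ k : ℚ) * q.eval (a + (n:ℚ)⁻¹) = z := by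
  induction q using Polynomial.induction_on' with
  | add p q hp hq =>
    obtain ⟨D, k, hD, h⟩ := hp
    obtain ⟨E, l, hE, h'⟩ := hq
    refine ⟨D * E, k + l, by positivity, fun n hn => ?_⟩
    obtain ⟨z, hz⟩ := h n hn
    obtain ⟨w, hw⟩ := h' n hn
    refine ⟨E * n ^ l * z + D * n ^ k * w, ?_⟩
    push_cast
    rw [← hz, ← hw, eval_add]
    ring
  | monomial j c =>
    refine ⟨c.den * a.den ^ j, j, by have := c.den_pos; have := a.den_pos; positivity, fun n hn => ?_⟩
    refine ⟨c.num * (a.num * n + a.den) ^ j, ?_⟩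
    have h1 : (c.den : ℚ) * c = c.num := Rat.den_mul_eq_num c
    have h2 : (a.den : ℚ) * a = a.num := Rat.den_mul_eq_num a
    have hn' : (n:ℚ) ≠ 0 := by positivity
    have h3 : (a.den : ℚ) * n * (a + (n:ℚ)⁻¹) = a.num * n + a.den := by
      rw [← h2]; field_simp
    push_cast
    rw [← h1, ← h3, eval_monomial, mul_pow, mul_pow]
    ring

theorem denom_family (a : ℚ) (c : ℕ → ℚ[X]) (N : ℕ) : ∃ D k : ℕ, 0 < D ∧ ∀ n : ℕ, 0 < n →
    ∀ i < N, ∃ z : ℤ, (D * n ^ k : ℚ) * (c i).eval (a + (n:ℚ)⁻¹) = z := by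
  induction N with
  | zero => exact ⟨1, 0, by simp, by simp⟩
  | succ N ih =>
    obtain ⟨D, k, hD, h⟩ := ih
    obtain ⟨E, l, hE, h'⟩ := denom_poly a (c N)
    refine ⟨D * E, k + l, by positivity, fun n hn i hi => ?_⟩
    rcases Nat.lt_succ_iff_lt_or_eq.1 hi with hi | rfl
    · obtain ⟨z, hz⟩ := h n hn i hi
      refine ⟨E * n ^ l * z, ?_⟩
      push_cast
      rw [← hz]
      ring
    · obtain ⟨z, hz⟩ := h' n hn
      refine ⟨D * n ^ k * z, ?_⟩
      push_cast
      rw [← hz]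
      ring

theorem root_denom (g : ℚ[X][X]) (hg : g.Monic) (a : ℚ) : ∃ D k : ℕ, 0 < D ∧ ∀ n : ℕ, 0 < n →
    ∀ y : ℚ, (g.map (evalRingHom (a + (n:ℚ)⁻¹))).eval y = 0 →
      ∃ z : ℤ, (D * n ^ k : ℚ) * y = z := by
  obtain ⟨D, k, hD, h⟩ := denom_family a g.coeff g.natDegree
  refine ⟨D, k, hD, fun n hn y hy => ?_⟩
  set p := g.map (evalRingHom (a + (n:ℚ)⁻¹)) with hp
  have hpm : p.Monic := hg.map _
  have hpd : p.natDegree = g.natDegree := hg.natDegree_map _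
  have hroot : (p.scaleRoots (D * n ^ k : ℚ)).eval ((D * n ^ k : ℚ) * y) = 0 := by
    have := scaleRoots_eval₂_eq_zero (RingHom.id ℚ) (p := p) (r := y) (s := (D * n ^ k : ℚ)) (by simpa [eval₂_id] using hy)
    simpa [eval₂_id] using this
  have hl : p.scaleRoots (D * n ^ k : ℚ) ∈ lifts (Int.castRingHom ℚ) := by
    rw [lifts_iff_coeff_lifts]
    intro i
    rw [coeff_scaleRoots, hpd]
    rcases lt_trichotomy i g.natDegree with hi | hi | hi
    · obtain ⟨z, hz⟩ := h n hn i hi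
      obtain ⟨r, hr⟩ := Nat.exists_eq_add_of_lt hi
      refine ⟨z * (D * n ^ k) ^ r, ?_⟩
      rw [hr, show i + r + 1 - i = r + 1 by omega]
      simp only [hp, coeff_map, coe_evalRingHom]
      push_cast [← hz, eq_intCast]
      ring
    · refine ⟨1, ?_⟩
      have : p.coeff i = 1 := by rw [hi, ← hpd]; exact hpm
      rw [this, hi]; simp
    · refine ⟨0, ?_⟩
      rw [coeff_eq_zero_of_natDegree_lt (by omega)]
      simp
  obtain ⟨q, hq, -, hqm⟩ := lifts_and_natDegree_eq_and_monic hl ((monic_scaleRoots_iff _).2 hpm)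
  have hIntg : IsIntegral ℤ ((D * n ^ k : ℚ) * y) := ⟨q, hqm, by
    rw [← hq, eval_map] at hroot
    exact hroot⟩
  obtain ⟨z, hz⟩ := IsIntegrallyClosed.isIntegral_iff.1 hIntg
  exact ⟨z, by simpa using hz.symm⟩

theorem tendsto_add_inv (a : ℝ) : Tendsto (fun n : ℕ => a + (n:ℝ)⁻¹) atTop (𝓝 a) := by
  simpa using (tendsto_inv_atTop_zero.comp (tendsto_natCast_atTop_atTop (R := ℝ))).const_add a

theorem branch_sparse (g : ℚ[X][X]) (hg : g.Monic) (hnr : ∀ A : ℚ[X], g.eval A ≠ 0)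
    (a : ℚ) (b : ℝ) (h0 : FR g (a, b) = 0) (h1 : FR (derivative g) (a, b) ≠ 0) :
    ∃ V ∈ 𝓝 b, Sparse {n : ℕ | ∃ y : ℚ, (y:ℝ) ∈ V ∧
      (g.map (evalRingHom (a + (n:ℚ)⁻¹))).eval y = 0} := by
  obtain ⟨α, hα, hloc⟩ := implicit_branch g a b h0 h1
  rw [nhds_prod_eq] at hloc
  obtain ⟨U, hU, V, hV, hUV⟩ := Filter.eventually_prod_iff.1 hloc
  refine ⟨{y | V y}, hV, ?_⟩
  obtain ⟨D, k, hD, hden⟩ := root_denom g hg a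
  have hα' : AnalyticAt ℝ (fun u => α (a + u)) 0 := by
    refine AnalyticAt.fun_comp (g := α) (f := fun u => (a:ℝ) + u) ?_ (by fun_prop)
    simpa using hα
  have hev := (tendsto_add_inv a).eventually hU
  have hFR : ∀ (n : ℕ) (y : ℚ), (g.map (evalRingHom (a + (n:ℚ)⁻¹))).eval y = 0 →
      FR g ((a:ℝ) + (n:ℝ)⁻¹, (y:ℝ)) = 0 := by
    intro n y hy
    have := FR_rat g (a + (n:ℚ)⁻¹) y
    rw [hy] at this
    simpa using this
  rcases branch_dichotomy hα' k D (by positivity) with hs | ⟨T, hT⟩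
  · refine hs.mono ?_
    filter_upwards [hev, eventually_gt_atTop 0] with n hn hn0
    rintro ⟨y, hy, hy0⟩
    obtain ⟨z, hz⟩ := hden n hn0 y hy0
    refine ⟨z, ?_⟩
    have h5 : α ((a:ℝ) + (n:ℝ)⁻¹) = y := (hUV hn hy).1 (hFR n y hy0)
    rw [h5]
    exact_mod_cast hz
  · have hTn : ∀ᶠ n : ℕ in atTop, α ((a:ℝ) + (n:ℝ)⁻¹) = T.eval ((n:ℝ)⁻¹) :=
      tendsto_natCast_atTop_atTop.eventually (ev_inv hT)
    by_contra hns
    set B := {n : ℕ | ∃ y : ℚ, (y:ℝ) ∈ {y | V y} ∧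
      (g.map (evalRingHom (a + (n:ℚ)⁻¹))).eval y = 0} with hB
    have hfreq : ∃ᶠ n in atTop, n ∈ B := by
      intro hc
      exact hns (sparse_empty.mono (by filter_upwards [hc] with n hn h using absurd h hn))
    have hfreq2 := (hfreq.and_eventually (hev.and (hTn.and (eventually_gt_atTop 0))))
    rw [Nat.frequently_atTop_iff_infinite] at hfreq2
    have hTy : ∀ n ∈ {n | n ∈ B ∧ U (a + (n:ℝ)⁻¹) ∧ α ((a:ℝ) + (n:ℝ)⁻¹) = T.eval ((n:ℝ)⁻¹) ∧ 0 < n},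
        ∃ y : ℚ, T.eval ((n:ℝ)⁻¹) = y ∧ (g.map (evalRingHom (a + (n:ℚ)⁻¹))).eval y = 0 := by
      rintro n ⟨⟨y, hy, hy0⟩, hn, hn2, hn0⟩
      refine ⟨y, ?_, hy0⟩
      rw [← hn2]
      exact (hUV hn hy).1 (hFR n y hy0)
    have hinj : Function.Injective (fun n : ℕ => (n:ℚ)⁻¹) := fun x y h => by simpa using h
    obtain ⟨A, rfl⟩ := rational_poly T _ (hfreq2.image hinj.injOn) (by
      rintro _ ⟨n, hn, rfl⟩
      obtain ⟨y, hy, -⟩ := hTy n hn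
      exact ⟨y, by simpa using hy⟩)
    apply hnr (A.comp (X - C a))
    have hinj2 : Function.Injective (fun n : ℕ => a + (n:ℚ)⁻¹) := fun x y h => by simpa using h
    refine Polynomial.eq_zero_of_infinite_isRoot _ ((hfreq2.image hinj2.injOn).mono ?_)
    rintro _ ⟨n, hn, rfl⟩
    obtain ⟨y, hy, hy0⟩ := hTy n hn
    have hAy : A.eval ((n:ℚ)⁻¹) = y := by
      have h3 : ((n:ℝ)⁻¹) = algebraMap ℚ ℝ ((n:ℚ)⁻¹) := by simp
      rw [h3, eval_map_apply] at hy
      simpa using hy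
    change evalRingHom _ _ = 0
    have hcomp : (evalRingHom (a + (n:ℚ)⁻¹)) (A.comp (X - C a)) = y := by
      simp [eval_comp, hAy]
    rw [← hcomp, eval_map_apply] at hy0
    exact hy0

theorem roots_near (g : ℚ[X][X]) (hg : g.Monic) (a : ℝ) (W : Set ℝ) (hW : IsOpen W)
    (h : ∀ b, FR g (a, b) = 0 → b ∈ W) :
    ∀ᶠ t in 𝓝 a, ∀ y, FR g (t, y) = 0 → y ∈ W := by
  have hcont : Continuous (FR g) := (FR_contDiff g).continuous
  obtain ⟨M, hM⟩ : ∃ M : ℝ, ∀ i < g.natDegree, ‖ev a (g.coeff i)‖ < M := by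
    obtain ⟨M, hM⟩ := ((Finset.range g.natDegree).image fun i => ‖ev a (g.coeff i)‖).bddAbove
    refine ⟨M + 1, fun i hi => lt_of_le_of_lt (hM ?_) (lt_add_one M)⟩
    simp only [Finset.coe_image, Set.mem_image, Finset.coe_range, Set.mem_Iio]
    exact ⟨i, hi, rfl⟩
  have hcoef : ∀ᶠ t in 𝓝 a, ∀ i ∈ Finset.range g.natDegree, ‖ev t (g.coeff i)‖ < M := by
    rw [Filter.eventually_all_finset]
    intro i hi
    have hc : Continuous fun t => ‖ev t (g.coeff i)‖ := by
      simp only [ev, coe_eval₂RingHom, eval₂_eq_sum_range]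
      fun_prop
    exact hc.continuousAt.eventually_lt_const (hM i (Finset.mem_range.1 hi))
  have hK : IsCompact (Metric.closedBall (0:ℝ) (|M| + 1) \ W) :=
    (isCompact_closedBall _ _).diff hW
  have htube := hK.eventually_forall_of_forall_eventually (x₀ := a)
    (P := fun t y => FR g (t, y) ≠ 0) (by
      intro y hy
      have : FR g (a, y) ≠ 0 := fun h0 => hy.2 (h y h0)
      exact hcont.continuousAt.eventually_ne this)
  filter_upwards [hcoef, htube] with t ht1 ht2 y hy
  by_contra hyW
  refine ht2 y ⟨?_, hyW⟩ hy
  have hm : (g.map (ev t)).Monic := hg.map _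
  have hb := IsRoot.norm_lt_cauchyBound hm.ne_zero (a := y) hy
  have hcb : (cauchyBound (g.map (ev t)) : ℝ) ≤ |M| + 1 := by
    rw [cauchyBound, hm.leadingCoeff, hg.natDegree_map]
    simp only [nnnorm_one, div_one, NNReal.coe_add, NNReal.coe_one]
    gcongr
    rw [← Real.coe_toNNReal _ (abs_nonneg M), NNReal.coe_le_coe]
    apply Finset.sup_le
    intro i hi
    rw [← NNReal.coe_le_coe, Real.coe_toNNReal _ (abs_nonneg M), coeff_map]
    exact (ht1 i hi).le.trans (le_abs_self M)
  rw [mem_closedBall_zero_iff]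
  exact (by exact_mod_cast hb.le : ‖y‖ ≤ _).trans hcb

theorem poly_sparse (g : ℚ[X][X]) (hg : g.Monic) (hnr : ∀ A : ℚ[X], g.eval A ≠ 0)
    (a : ℚ) (h1 : ∀ b : ℝ, FR g (a, b) = 0 → FR (derivative g) (a, b) ≠ 0) :
    Sparse {n : ℕ | ∃ y : ℚ, (g.map (evalRingHom (a + (n:ℚ)⁻¹))).eval y = 0} := by
  classical
  have hV : ∀ b : ℝ, ∃ V ∈ 𝓝 b, FR g (a, b) = 0 → Sparse {n : ℕ | ∃ y : ℚ, (y:ℝ) ∈ V ∧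
      (g.map (evalRingHom (a + (n:ℚ)⁻¹))).eval y = 0} := by
    intro b
    by_cases hb : FR g (a, b) = 0
    · obtain ⟨V, hV, hs⟩ := branch_sparse g hg hnr a b hb (h1 b hb)
      exact ⟨V, hV, fun _ => hs⟩
    · exact ⟨Set.univ, univ_mem, fun h => absurd h hb⟩
  choose V hVn hVs using hV
  have hne : g.map (ev (a:ℝ)) ≠ 0 := (hg.map _).ne_zero
  set Z := (g.map (ev (a:ℝ))).roots.toFinset with hZ
  have hZm : ∀ b, b ∈ Z ↔ FR g (a, b) = 0 := by
    intro b
    rw [hZ, Multiset.mem_toFinset, mem_roots hne]; rfl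
  have hnear := roots_near g hg a (⋃ b ∈ Z, interior (V b))
    (isOpen_biUnion fun _ _ => isOpen_interior) (by
      intro b hb
      exact Set.mem_biUnion (x := b) ((hZm b).2 hb) (mem_interior_iff_mem_nhds.2 (hVn b)))
  refine (sparse_biUnion Z _ fun b hb => hVs b ((hZm b).1 hb)).mono ?_
  filter_upwards [(tendsto_add_inv a).eventually hnear] with n hn
  rintro ⟨y, hy⟩
  have h2 := FR_rat g (a + (n:ℚ)⁻¹) y
  rw [hy] at h2
  have := hn y (by simpa using h2)
  simp only [Set.mem_iUnion] at this ⊢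
  obtain ⟨b, hb, hyb⟩ := this
  exact ⟨b, hb, y, interior_subset hyb, hy⟩

theorem hilbert (S : Finset ℚ[X][X]) (hm : ∀ g ∈ S, g.Monic)
    (hnr : ∀ g ∈ S, ∀ A : ℚ[X], g.eval A ≠ 0)
    (hsep : ∀ g ∈ S, ∃ (U V : ℚ[X][X]) (d : ℚ[X]), d ≠ 0 ∧ U * g + V * derivative g = C d)
    (e : ℚ[X]) (he : e ≠ 0) :
    ∃ t : ℚ, e.eval t ≠ 0 ∧ ∀ g ∈ S, ∀ y : ℚ, (g.map (evalRingHom t)).eval y ≠ 0 := by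
  classical
  choose! U V d hd hUV using hsep
  have hprod : (∏ g ∈ S, d g) ≠ 0 := Finset.prod_ne_zero_iff.2 hd
  obtain ⟨a, ha⟩ : ∃ a : ℚ, (∏ g ∈ S, d g).eval a ≠ 0 := by
    by_contra! hc
    exact hprod (Polynomial.funext (by simpa using hc))
  rw [eval_prod, Finset.prod_ne_zero_iff] at ha
  have hsp : Sparse (⋃ g ∈ S, {n : ℕ | ∃ y : ℚ, (g.map (evalRingHom (a + (n:ℚ)⁻¹))).eval y = 0}) := by
    apply sparse_biUnion
    intro g hg
    apply poly_sparse g (hm g hg) (hnr g hg) a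
    intro b hb hb'
    have := congrArg (fun p => FR p ((a:ℝ), b)) (hUV g hg)
    simp only [FR, Polynomial.map_add, Polynomial.map_mul, eval_add, eval_mul, map_C, eval_C] at this hb hb'
    rw [hb, hb', ev_rat] at this
    apply ha g hg
    simpa using this.symm
  have hfin : {n : ℕ | e.eval (a + (n:ℚ)⁻¹) = 0}.Finite := by
    by_contra hinf
    have hinj2 : Function.Injective (fun n : ℕ => a + (n:ℚ)⁻¹) := fun x y h => by simpa using h
    refine he (Polynomial.eq_zero_of_infinite_isRoot _ ((Set.Infinite.image hinj2.injOn hinf).mono ?_))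
    rintro _ ⟨n, hn, rfl⟩
    exact hn
  obtain ⟨N, hN⟩ := hfin.bddAbove
  obtain ⟨n, hn, hnB⟩ := hsp.exists_notMem (N+1)
  refine ⟨a + (n:ℚ)⁻¹, fun h => ?_, fun g hg y hy => hnB ?_⟩
  · have := hN h
    omega
  · simp only [Set.mem_iUnion]
    exact ⟨g, hg, y, hy⟩

end HIT
open Polynomial Filter Topology
open scoped Pointwise

namespace HIT

section abs

variable {B : Type} [CommRing B] [IsDomain B] [Algebra ℚ[X] B]

theorem minpoly_no_root {c : B} (hi : IsIntegral ℚ[X] c) (A : ℚ[X])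
    (h : (minpoly ℚ[X] c).eval A = 0) : c = algebraMap ℚ[X] B A := by
  obtain ⟨q, hq⟩ := dvd_iff_isRoot.2 h
  have hu : IsUnit q := by
    refine ((minpoly.irreducible hi).isUnit_or_isUnit hq).resolve_left ?_
    exact not_isUnit_X_sub_C A
  have h0 := minpoly.aeval ℚ[X] c
  rw [hq, map_mul] at h0
  have hu' : aeval c q ≠ 0 := (hu.map (aeval c)).ne_zero
  have := (mul_eq_zero.1 h0).resolve_right hu'
  rw [map_sub, aeval_X, aeval_C, sub_eq_zero] at this
  exact this

theorem minpoly_sep {c : B} (hi : IsIntegral ℚ[X] c) :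
    ∃ (U V : ℚ[X][X]) (d : ℚ[X]), d ≠ 0 ∧
      U * minpoly ℚ[X] c + V * derivative (minpoly ℚ[X] c) = C d := by
  set g := minpoly ℚ[X] c with hg
  have hm : g.Monic := minpoly.monic hi
  have hirr : Irreducible (g.map (algebraMap ℚ[X] (RatFunc ℚ))) :=
    (hm.irreducible_iff_irreducible_map_fraction_map).1 (minpoly.irreducible hi)
  obtain ⟨u, v, huv⟩ := hirr.separable
  obtain ⟨b, hb, hbu⟩ := IsLocalization.integerNormalization_spec (nonZeroDivisors ℚ[X]) u
  obtain ⟨d, hd, hdv⟩ := IsLocalization.integerNormalization_spec (nonZeroDivisors ℚ[X]) v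
  refine ⟨C d * IsLocalization.integerNormalization (nonZeroDivisors ℚ[X]) u,
    C b * IsLocalization.integerNormalization (nonZeroDivisors ℚ[X]) v, b * d,
    mul_ne_zero (nonZeroDivisors.ne_zero hb) (nonZeroDivisors.ne_zero hd), ?_⟩
  apply Polynomial.map_injective _ (IsFractionRing.injective ℚ[X] (RatFunc ℚ))
  simp only [Polynomial.map_add, Polynomial.map_mul, map_C, hbu, hdv, ← derivative_map]
  rw [algebra_compatible_smul (RatFunc ℚ) b, algebra_compatible_smul (RatFunc ℚ) d, smul_eq_C_mul,
    smul_eq_C_mul, map_mul, C_mul]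
  linear_combination (C (algebraMap ℚ[X] (RatFunc ℚ) b) * C (algebraMap ℚ[X] (RatFunc ℚ) d)) * huv

end abs

theorem transfer (F E : Type) [Field F] [Field E] [Algebra F E] [FiniteDimensional F E]
    [IsGalois F E] (f : F ≃+* ℚ) : ∃ (_ : Algebra ℚ E), FiniteDimensional ℚ E ∧ IsGalois ℚ E ∧
      Nonempty ((E ≃ₐ[ℚ] E) ≃* (E ≃ₐ[F] E)) := by
  let alg : Algebra ℚ E := ((algebraMap F E).comp (f.symm : ℚ →+* F)).toAlgebra
  have hcomp : (algebraMap ℚ E).comp (f : F →+* ℚ) =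
      ((RingEquiv.refl E : E ≃+* E) : E →+* E).comp (algebraMap F E) := by
    ext x
    change algebraMap F E (f.symm (f x)) = _
    rw [f.symm_apply_apply]; rfl
  have hc1 : ∀ x, algebraMap ℚ E (f x) = algebraMap F E x := fun x => congrArg (· x) hcomp
  have hc2 : ∀ x, algebraMap F E (f.symm x) = algebraMap ℚ E x := fun x => rfl
  refine ⟨alg, Module.Finite.of_equiv_equiv f (RingEquiv.refl E) hcomp,
    IsGalois.of_equiv_equiv (f := f) (g := RingEquiv.refl E) hcomp, ⟨?_⟩⟩
  exact
  { toFun := fun σ => AlgEquiv.ofRingEquiv (f := σ.toRingEquiv) (fun x => by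
      rw [← hc1]; exact σ.commutes _)
    invFun := fun σ => AlgEquiv.ofRingEquiv (f := σ.toRingEquiv) (fun x => by
      rw [← hc2]; exact σ.commutes _)
    left_inv := fun σ => rfl
    right_inv := fun σ => rfl
    map_mul' := fun σ τ => rfl }

theorem specialize (B : Type) [CommRing B] [IsDomain B] [Algebra ℚ[X] B] [FaithfulSMul ℚ[X] B]
    (Γ : Type) [Group Γ] [Finite Γ] [MulSemiringAction Γ B] [SMulCommClass Γ ℚ[X] B]
    [Algebra.IsInvariant ℚ[X] B Γ]
    (hc : ∀ H : Subgroup Γ, H ≠ ⊤ → ∃ c : B, (∀ σ ∈ H, σ • c = c) ∧ ∀ A, c ≠ algebraMap ℚ[X] B A)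
    (hf : ∀ σ : Γ, σ ≠ 1 → ∃ b : B, σ • b ≠ b) :
    ∃ (M : Type) (_ : Field M) (_ : Algebra ℚ M),
      FiniteDimensional ℚ M ∧ IsGalois ℚ M ∧ Nonempty ((M ≃ₐ[ℚ] M) ≃* Γ) := by
  classical
  have hIntg : Algebra.IsIntegral ℚ[X] B := Algebra.IsInvariant.isIntegral ℚ[X] B Γ
  have hI : ∀ x : B, IsIntegral ℚ[X] x := fun x => hIntg.isIntegral x
  choose! c hcfix hcnr using hc
  choose! b hb using hf
  cases nonempty_fintype Γ
  have : Finite (Subgroup Γ) := inferInstance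
  cases nonempty_fintype (Subgroup Γ)
  obtain ⟨t, het, hgt⟩ := hilbert
    (((Finset.univ : Finset (Subgroup Γ)).filter (· ≠ ⊤)).image fun H => minpoly ℚ[X] (c H))
    (by
      intro g hg
      obtain ⟨H, -, rfl⟩ := Finset.mem_image.1 hg
      exact minpoly.monic (hI _))
    (by
      intro g hg A hA
      obtain ⟨H, hH, rfl⟩ := Finset.mem_image.1 hg
      exact hcnr H (Finset.mem_filter.1 hH).2 A (minpoly_no_root (hI _) A hA))
    (by
      intro g hg
      obtain ⟨H, -, rfl⟩ := Finset.mem_image.1 hg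
      exact minpoly_sep (hI _))
    (∏ σ ∈ (Finset.univ : Finset Γ).filter (· ≠ 1), (minpoly ℚ[X] (σ • b σ - b σ)).eval 0)
    (by
      rw [Finset.prod_ne_zero_iff]
      intro σ hσ h0
      have := minpoly_no_root (hI _) 0 h0
      rw [map_zero, sub_eq_zero] at this
      exact hb σ (Finset.mem_filter.1 hσ).2 this)
  rw [eval_prod, Finset.prod_ne_zero_iff] at het
  have hsurj : Function.Surjective (evalRingHom t) := fun y => ⟨C y, by simp⟩
  set p : Ideal ℚ[X] := RingHom.ker (evalRingHom t) with hp
  have hpmax : p.IsMaximal := RingHom.ker_isMaximal_of_surjective _ hsurj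
  obtain ⟨P, hPmax, hPover⟩ := Ideal.exists_maximal_ideal_liesOver_of_isIntegral (S := B) p
  have hmem : ∀ q : ℚ[X], algebraMap ℚ[X] B q ∈ P → q.eval t = 0 := by
    intro q hq
    have : q ∈ p := by rw [hPover.over]; exact hq
    exact this
  let := Ideal.Quotient.field p
  let := Ideal.Quotient.field P
  let f : (ℚ[X] ⧸ p) ≃+* ℚ := RingHom.quotientKerEquivOfSurjective hsurj
  have : CharZero (ℚ[X] ⧸ p) := charZero_of_injective_ringHom (f := (f.symm : ℚ →+* _)) f.symm.injective
  have hnorm : Normal (ℚ[X] ⧸ p) (B ⧸ P) := Ideal.Quotient.normal Γ p P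
  have hsep : Algebra.IsSeparable (ℚ[X] ⧸ p) (B ⧸ P) := inferInstance
  have hfin : Module.Finite (ℚ[X] ⧸ p) (B ⧸ P) := Ideal.Quotient.finite_of_isInvariant Γ p P
  have hgal : IsGalois (ℚ[X] ⧸ p) (B ⧸ P) := ⟨⟩
  have hst := Ideal.Quotient.stabilizerHom_surjective (A := ℚ[X]) (B := B) Γ p P
  -- polynomial values are congruent
  have hcong : ∀ (g : ℚ[X][X]) (x y : B), x - y ∈ P → aeval x g = 0 → aeval y g ∈ P := by
    intro g x y hxy h0
    have h1 := sub_dvd_eval_sub x y (g.map (algebraMap ℚ[X] B))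
    rw [eval_map_algebraMap, eval_map_algebraMap, h0, zero_sub, dvd_neg] at h1
    exact Ideal.mem_of_dvd _ h1 hxy
  have htop : MulAction.stabilizer Γ P = ⊤ := by
    by_contra hne
    set D := MulAction.stabilizer Γ P with hD
    have hfix : ∀ τ : (B ⧸ P) ≃ₐ[ℚ[X] ⧸ p] (B ⧸ P),
        τ (Ideal.Quotient.mk P (c D)) = Ideal.Quotient.mk P (c D) := by
      intro τ
      obtain ⟨σ, rfl⟩ := hst τ
      rw [Ideal.Quotient.stabilizerHom_apply]
      exact congrArg _ (hcfix D hne σ σ.2)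
    obtain ⟨q', hq'⟩ := (IsGalois.mem_range_algebraMap_iff_fixed _).2 hfix
    obtain ⟨q, rfl⟩ := Ideal.Quotient.mk_surjective q'
    have hq2 : Ideal.Quotient.mk P (algebraMap ℚ[X] B q) = Ideal.Quotient.mk P (c D) := hq'
    have h1 := hcong (minpoly ℚ[X] (c D)) (c D) (algebraMap ℚ[X] B q)
      (Ideal.Quotient.eq.1 hq2.symm) (minpoly.aeval _ _)
    rw [aeval_algebraMap_apply] at h1
    have h2 := hmem _ h1
    refine hgt (minpoly ℚ[X] (c D)) (Finset.mem_image.2 ⟨D, by simpa using hne, rfl⟩) (q.eval t) ?_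
    change eval (evalRingHom t q) (Polynomial.map (evalRingHom t) (minpoly ℚ[X] (c D))) = 0
    rw [eval_map_apply]
    exact h2
  have hinj : Function.Injective (Ideal.Quotient.stabilizerHom P p Γ) := by
    rw [injective_iff_map_eq_one]
    intro σ hσ
    by_contra hne
    have hne' : (σ : Γ) ≠ 1 := fun h => hne (Subtype.ext h)
    have h1 : Ideal.Quotient.mk P ((σ : Γ) • b σ) = Ideal.Quotient.mk P (b σ) := by
      have := congrArg (fun τ => τ (Ideal.Quotient.mk P (b σ))) hσ
      simp only [Ideal.Quotient.stabilizerHom_apply] at this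
      exact this
    have h2 := hcong (minpoly ℚ[X] ((σ : Γ) • b σ - b σ)) _ (algebraMap ℚ[X] B 0)
      (by rw [map_zero, sub_zero]; exact Ideal.Quotient.eq.1 h1) (minpoly.aeval _ _)
    rw [aeval_algebraMap_apply] at h2
    exact het σ (by simpa using hne') (hmem _ h2)
  obtain ⟨alg, h1, h2, ⟨e⟩⟩ := transfer (ℚ[X] ⧸ p) (B ⧸ P) f
  refine ⟨B ⧸ P, _, alg, h1, h2, ⟨e.trans ?_⟩⟩
  exact ((MulEquiv.ofBijective _ ⟨hinj, hst⟩).symm.trans (MulEquiv.subgroupCongr htop)).trans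
    Subgroup.topEquiv

theorem main (N : Type) [Field N] [Algebra (RatFunc ℚ) N] [FiniteDimensional (RatFunc ℚ) N]
    [IsGalois (RatFunc ℚ) N] [Algebra ℚ[X] N] [IsScalarTower ℚ[X] (RatFunc ℚ) N] :
    ∃ (M : Type) (_ : Field M) (_ : Algebra ℚ M),
      FiniteDimensional ℚ M ∧ IsGalois ℚ M ∧
        Nonempty ((M ≃ₐ[ℚ] M) ≃* (N ≃ₐ[RatFunc ℚ] N)) := by
  let := IsIntegralClosure.MulSemiringAction ℚ[X] (RatFunc ℚ) N (integralClosure ℚ[X] N)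
  have : IsFractionRing (integralClosure ℚ[X] N) N :=
    IsIntegralClosure.isFractionRing_of_finite_extension ℚ[X] (RatFunc ℚ) N _
  have : Algebra.IsInvariant ℚ[X] (integralClosure ℚ[X] N) (N ≃ₐ[RatFunc ℚ] N) :=
    Algebra.isInvariant_of_isGalois ℚ[X] (RatFunc ℚ) N (integralClosure ℚ[X] N)
  have hsm : ∀ (σ : N ≃ₐ[RatFunc ℚ] N) (x : integralClosure ℚ[X] N), ((σ • x : integralClosure ℚ[X] N) : N) = σ x :=
    fun σ x => algebraMap_galRestrict_apply ℚ[X] σ x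
  have : SMulCommClass (N ≃ₐ[RatFunc ℚ] N) ℚ[X] (integralClosure ℚ[X] N) :=
    ⟨fun σ q x => map_smul (galRestrict ℚ[X] (RatFunc ℚ) N (integralClosure ℚ[X] N) σ) q x⟩
  have : FaithfulSMul ℚ[X] N := by
    rw [faithfulSMul_iff_algebraMap_injective, IsScalarTower.algebraMap_eq ℚ[X] (RatFunc ℚ) N]
    exact (algebraMap (RatFunc ℚ) N).injective.comp (IsFractionRing.injective ℚ[X] (RatFunc ℚ))
  have : FaithfulSMul ℚ[X] (integralClosure ℚ[X] N) := by
    rw [faithfulSMul_iff_algebraMap_injective]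
    intro x y h
    exact FaithfulSMul.algebraMap_injective ℚ[X] N (congrArg Subtype.val h)
  have hmul : ∀ x : N, ∃ (q : ℚ[X]) (c : integralClosure ℚ[X] N), q ≠ 0 ∧
      (c : N) = algebraMap (RatFunc ℚ) N (algebraMap ℚ[X] (RatFunc ℚ) q) * x := by
    intro x
    have hx : IsIntegral (RatFunc ℚ) x := Algebra.IsIntegral.isIntegral x
    obtain ⟨q, hq⟩ := hx.exists_multiple_integral_of_isLocalization (nonZeroDivisors ℚ[X]) x
    refine ⟨q, ⟨_, hq⟩, nonZeroDivisors.ne_zero q.2, ?_⟩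
    rw [← IsScalarTower.algebraMap_apply, ← Algebra.smul_def]
    rfl
  have hq0 : ∀ q : ℚ[X], q ≠ 0 → algebraMap (RatFunc ℚ) N (algebraMap ℚ[X] (RatFunc ℚ) q) ≠ 0 := by
    intro q hq
    simpa using hq
  refine specialize (integralClosure ℚ[X] N) (N ≃ₐ[RatFunc ℚ] N) ?_ ?_
  · intro H hH
    have hne : IntermediateField.fixedField H ≠ ⊥ := by
      intro h
      apply hH
      rw [← IntermediateField.fixingSubgroup_fixedField H, h, IntermediateField.fixingSubgroup_bot]
    obtain ⟨x, hx, hx'⟩ := SetLike.exists_of_lt (bot_lt_iff_ne_bot.2 hne)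
    obtain ⟨q, c, hq, hcq⟩ := hmul x
    refine ⟨c, fun σ hσ => ?_, fun A hA => hx' ?_⟩
    · apply Subtype.ext
      rw [hsm, hcq, map_mul, AlgEquiv.commutes]
      congr 1
      exact hx ⟨σ, hσ⟩
    · rw [hA] at hcq
      rw [IntermediateField.mem_bot]
      refine ⟨algebraMap ℚ[X] (RatFunc ℚ) A / algebraMap ℚ[X] (RatFunc ℚ) q, ?_⟩
      rw [map_div₀, div_eq_iff (hq0 q hq), mul_comm, ← hcq, ← IsScalarTower.algebraMap_apply]
      rfl
  · intro σ hσ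
    obtain ⟨x, hx⟩ : ∃ x, σ x ≠ x := by
      by_contra! h
      exact hσ (AlgEquiv.ext h)
    obtain ⟨q, c, hq, hcq⟩ := hmul x
    refine ⟨c, fun h => hx ?_⟩
    have := congrArg Subtype.val h
    rw [hsm, hcq, map_mul, AlgEquiv.commutes] at this
    exact mul_left_cancel₀ (hq0 q hq) this

end HIT

/-- If a finite group `G` occurs as a Galois group over the rational function field
`ℚ(t)`, then it occurs as a Galois group over `ℚ`. -/
theorem occurs_over_ratFunc_rat_implies_occurs_over_rat (G : Type) [Group G] [Finite G]
    (h : ∃ (N : Type) (_ : Field N) (_ : Algebra (RatFunc ℚ) N),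
      FiniteDimensional (RatFunc ℚ) N ∧ IsGalois (RatFunc ℚ) N ∧
        Nonempty ((N ≃ₐ[RatFunc ℚ] N) ≃* G)) :
    ∃ (M : Type) (_ : Field M) (_ : Algebra ℚ M),
      FiniteDimensional ℚ M ∧ IsGalois ℚ M ∧
        Nonempty ((M ≃ₐ[ℚ] M) ≃* G) := by
  obtain ⟨N, _, _, h1, h2, ⟨e⟩⟩ := h
  let : Algebra ℚ[X] N :=
    ((algebraMap (RatFunc ℚ) N).comp (algebraMap ℚ[X] (RatFunc ℚ))).toAlgebra
  have : IsScalarTower ℚ[X] (RatFunc ℚ) N := IsScalarTower.of_algebraMap_eq fun x => rfl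
  obtain ⟨M, i1, i2, h3, h4, ⟨e'⟩⟩ := HIT.main N
  exact ⟨M, i1, i2, h3, h4, ⟨e'.trans e⟩⟩
end

section
/- Let n ≥ 1, let M = ℚ(x₁, …, xₙ) be the field of rational functions in n indeterminates over ℚ, and let G be a subgroup of the symmetric group Sₙ acting on M by permuting the indeterminates. If the fixed field K = M^G is rational over ℚ (i.e. K is isomorphic as a field extension of ℚ to a field of rational functions ℚ(w₁, …, w_m) in finitely many indeterminates), then G occurs as a Galois group over ℚ; that is, there exists a finite Galois extension L/ℚ with Gal(L/ℚ) isomorphic to G. -/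
section PartD
open MvPolynomial

lemma totalDegree_aeval_linear_le {n k : ℕ} {F : Type*} [Field F]
    (g : Fin n → MvPolynomial (Fin k) F) (hg : ∀ i, (g i).totalDegree ≤ 1)
    (h : MvPolynomial (Fin n) F) : (aeval g h).totalDegree ≤ h.totalDegree := by
  rw [aeval_def, eval₂_eq']
  refine totalDegree_finsetSum_le fun d hd => ?_
  refine (totalDegree_mul _ _).trans ?_
  have h1 : (algebraMap F (MvPolynomial (Fin k) F) (coeff d h)).totalDegree = 0 := by
    rw [MvPolynomial.algebraMap_eq, totalDegree_C]
  rw [h1, zero_add]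
  refine (totalDegree_finsetProd _ _).trans ?_
  have h2 : ∑ i, (g i ^ d i).totalDegree ≤ ∑ i, d i := by
    refine Finset.sum_le_sum fun i _ => (totalDegree_pow _ _).trans ?_
    calc d i * (g i).totalDegree ≤ d i * 1 := Nat.mul_le_mul_left _ (hg i)
      _ = d i := mul_one _
  refine h2.trans ?_
  have h3 := le_totalDegree hd
  rwa [Finsupp.sum_fintype _ _ (fun _ => rfl)] at h3

/-- Vectors twisted by a permutation span. -/
lemma span_twisted {n : ℕ} {p : ℕ} [hp : Fact p.Prime] {N : ℕ} (hN : N ≠ 0)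
    (F : Type) [Field F] [Fintype F] [CharP F p] (hcard : Fintype.card F = p ^ N)
    (σ : Equiv.Perm (Fin n)) (hσ : σ ^ N = 1) :
    Submodule.span F {v : Fin n → F | ∀ i, v i ^ p = v (σ i)} = ⊤ := by
  by_contra hne
  obtain ⟨f, hf0, hf⟩ := Submodule.exists_le_ker_of_lt_top _ (lt_top_iff_ne_top.mpr hne)
  apply hf0
  have key : ∀ c : Fin n, f (Pi.single c 1) = 0 := by
    intro c
    have hv : ∀ α : F, (∑ j ∈ Finset.range N, α ^ (p ^ j) • (Pi.single ((σ ^ j) c) 1 : Fin n → F))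
        ∈ {v : Fin n → F | ∀ i, v i ^ p = v (σ i)} := by
      intro α i
      simp only [Finset.sum_apply, Pi.smul_apply, smul_eq_mul]
      rw [sum_pow_char]
      have e1 : ∀ j, (α ^ p ^ j * (Pi.single ((σ ^ j) c) 1 : Fin n → F) i) ^ p
          = α ^ p ^ (j + 1) * (Pi.single ((σ ^ (j + 1)) c) 1 : Fin n → F) (σ i) := by
        intro j
        rw [mul_pow, ← pow_mul, ← pow_succ]
        congr 1
        simp only [Pi.single_apply, pow_succ', Equiv.Perm.mul_apply, EmbeddingLike.apply_eq_iff_eq]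
        split_ifs
        · simp
        · exact zero_pow hp.out.ne_zero
      rw [Finset.sum_congr rfl fun j _ => e1 j]
      set G : ℕ → F := fun j => α ^ p ^ j * (Pi.single ((σ ^ j) c) 1 : Fin n → F) (σ i) with hG
      have e2 := Finset.sum_range_succ G N
      rw [Finset.sum_range_succ'] at e2
      have e3 : G N = G 0 := by
        simp only [hG, hσ, pow_zero, pow_one, ← hcard, FiniteField.pow_card]
      rw [e3] at e2
      exact add_right_cancel e2
    have hz : ∀ α : F, ∑ j ∈ Finset.range N, α ^ (p ^ j) * f (Pi.single ((σ ^ j) c) 1) = 0 := by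
      intro α
      have := hf (Submodule.subset_span (hv α))
      simpa [LinearMap.mem_ker, map_sum] using this
    let P : Polynomial F := ∑ j ∈ Finset.range N,
      Polynomial.monomial (p ^ j) (f (Pi.single ((σ ^ j) c) 1))
    have hP : P = 0 := by
      apply Polynomial.eq_zero_of_natDegree_lt_card_of_eval_eq_zero P
        (Function.injective_id (α := F))
      · intro α
        simp only [P, Polynomial.eval_finsetSum, Polynomial.eval_monomial, id]
        rw [← hz α]
        exact Finset.sum_congr rfl fun _ _ => mul_comm _ _
      · rw [hcard]
        refine lt_of_le_of_lt (Polynomial.natDegree_sum_le_of_forall_le (n := p ^ (N - 1)) _ _ ?_) ?_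
        · intro j hj
          refine (Polynomial.natDegree_monomial_le _).trans ?_
          have := Finset.mem_range.mp hj
          exact Nat.pow_le_pow_right hp.out.pos (by omega)
        · exact Nat.pow_lt_pow_right hp.out.one_lt (by omega)
    have hc := congrArg (fun q => Polynomial.coeff q 1) hP
    simp only [P, Polynomial.finsetSum_coeff, Polynomial.coeff_monomial, Polynomial.coeff_zero] at hc
    rw [Finset.sum_eq_single 0] at hc
    · simpa using hc
    · intro j _ hj
      rw [if_neg]
      intro h
      rw [Nat.pow_eq_one] at h
      rcases h with h | h
      · exact hp.out.one_lt.ne' h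
      · exact hj h
    · intro h
      exact absurd (Finset.mem_range.mpr (Nat.pos_of_ne_zero hN)) h
  apply LinearMap.pi_ext'
  intro i
  ext
  simpa using key i

lemma exists_twisted_point {n : ℕ} (h : MvPolynomial (Fin n) ℤ) (h0 : h ≠ 0)
    (σ : Equiv.Perm (Fin n)) (B0 : ℕ) :
    ∃ p : ℕ, p.Prime ∧ B0 < p ∧ ∃ (F : Type) (_ : Field F) (_ : CharP F p) (ξ : Fin n → F),
      (∀ i, ξ i ^ p = ξ (σ i)) ∧ aeval ξ h ≠ 0 := by
  classical
  obtain ⟨d, hd⟩ := MvPolynomial.ne_zero_iff.mp h0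
  obtain ⟨p, hpge, hp⟩ := Nat.exists_infinite_primes (B0 + h.totalDegree + (coeff d h).natAbs + 1)
  have : Fact p.Prime := ⟨hp⟩
  refine ⟨p, hp, by omega, ?_⟩
  set N := orderOf σ with hNdef
  have hN : N ≠ 0 := (orderOf_pos σ).ne'
  let F := GaloisField p N
  let _ : Fintype F := Fintype.ofFinite F
  have hcard : Fintype.card F = p ^ N := by
    rw [← Nat.card_eq_fintype_card]; exact GaloisField.card p N hN
  have hspan := span_twisted hN F hcard σ (pow_orderOf_eq_one σ)
  have hkf : ∃ (k : ℕ) (f : Fin k → (Fin n → F)), (∀ j i, f j i ^ p = f j (σ i)) ∧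
      Submodule.span F (Set.range f) = ⊤ := by
    obtain ⟨f, hfV, hfspan, -⟩ := Submodule.exists_fun_fin_finrank_span_eq F
      {v : Fin n → F | ∀ i, v i ^ p = v (σ i)}
    exact ⟨_, f, hfV, hfspan.trans hspan⟩
  obtain ⟨k, f, hfV, hfspan⟩ := hkf
  let h' : MvPolynomial (Fin n) F := map (Int.castRingHom F) h
  have hne0 : h' ≠ 0 := by
    refine MvPolynomial.ne_zero_iff.mpr ⟨d, ?_⟩
    rw [coeff_map]
    intro h1
    have h2 : ((coeff d h : ℤ) : F) = 0 := h1
    rw [CharP.intCast_eq_zero_iff F p] at h2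
    have := Int.natAbs_dvd_natAbs.mpr h2
    have := Nat.le_of_dvd (Int.natAbs_pos.mpr hd) this
    simp at this
    omega
  let g : Fin n → MvPolynomial (Fin k) F := fun i => ∑ j, C (f j i) * X j
  have hc : ∀ i : Fin n, ∃ c : Fin k → F, ∑ j, c j • f j = Pi.single i 1 := fun i =>
    Submodule.mem_span_range_iff_exists_fun F |>.mp (hfspan ▸ Submodule.mem_top)
  choose c hc using hc
  let g' : Fin k → MvPolynomial (Fin n) F := fun j => ∑ i, C (c i j) * X i
  have hgg : ∀ q : MvPolynomial (Fin n) F, aeval g' (aeval g q) = q := by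
    intro q
    have : (aeval g').comp (aeval g) = AlgHom.id F (MvPolynomial (Fin n) F) := by
      apply MvPolynomial.algHom_ext
      intro i
      simp only [AlgHom.comp_apply, aeval_X, g, map_sum, map_mul, AlgHom.id_apply]
      simp only [aeval_C, MvPolynomial.algebraMap_eq, g', Finset.mul_sum, ← mul_assoc, ← C_mul]
      rw [Finset.sum_comm]
      simp only [← Finset.sum_mul, ← map_sum]
      rw [Finset.sum_eq_single i]
      · have := congrFun (hc i) i
        simp only [Finset.sum_apply, Pi.smul_apply, smul_eq_mul, Pi.single_eq_same] at this
        simp only [mul_comm (f _ _), this, C_1, one_mul]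
      · intro i' _ hi'
        have := congrFun (hc i') i
        simp only [Finset.sum_apply, Pi.smul_apply, smul_eq_mul] at this
        rw [Pi.single_eq_of_ne hi'.symm] at this
        simp only [mul_comm (f _ _), this, C_0, zero_mul]
      · simp
    exact DFunLike.congr_fun this q
  have hgh : aeval g h' ≠ 0 := by
    intro h1
    apply hne0
    rw [← hgg h', h1, map_zero]
  have hdeg : (aeval g h').totalDegree < p := by
    refine lt_of_le_of_lt (totalDegree_aeval_linear_le g ?_ h') ?_
    · intro i
      refine totalDegree_finsetSum_le fun j _ => (totalDegree_mul _ _).trans ?_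
      rw [totalDegree_C, totalDegree_X]
    · have : h'.totalDegree ≤ h.totalDegree := by
        refine Finset.sup_mono (support_map_subset _ _)
      omega
  let S : Finset F := Finset.univ.image (ZMod.castHom (dvd_refl p) F)
  have hS : S.card = p := by
    rw [Finset.card_image_of_injective _ (RingHom.injective _), Finset.card_univ, ZMod.card]
  have hex : ∃ y : Fin k → F, (∀ j, y j ∈ S) ∧ eval y (aeval g h') ≠ 0 := by
    by_contra hcon
    push Not at hcon
    exact hgh (eq_zero_of_eval_zero_at_prod_finset _ (fun _ => S)
      (fun i => by rw [hS]; exact (degreeOf_le_totalDegree _ _).trans_lt hdeg) hcon)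
  obtain ⟨y, hyS, hy⟩ := hex
  refine ⟨F, inferInstance, inferInstance, fun i => ∑ j, f j i * y j, ?_, ?_⟩
  · intro i
    rw [sum_pow_char]
    refine Finset.sum_congr rfl fun j _ => ?_
    rw [mul_pow, hfV j i]
    congr 1
    obtain ⟨z, -, hz⟩ := Finset.mem_image.mp (hyS j)
    rw [← hz, ← map_pow, ZMod.pow_card]
  · intro h1
    apply hy
    rw [← h1]
    have e1 : eval y (aeval g h') = eval (fun i => eval y (g i)) h' := by
      rw [← aeval_eq_eval, ← aeval_eq_eval]
      rw [← AlgHom.comp_apply, comp_aeval]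
    rw [e1]
    simp only [h', eval_map, g, map_sum, map_mul, eval_C, eval_X]
    rfl
end PartD


section PartA
open MvPolynomial Pointwise NumberField

/-- A subgroup meeting every conjugacy class is everything. -/
lemma subgroup_eq_top_of_conj {Γ : Type*} [Group Γ] [Finite Γ] (D : Subgroup Γ)
    (h : ∀ γ : Γ, ∃ g : Γ, g * γ * g⁻¹ ∈ D) : D = ⊤ := by
  classical
  let _ := Fintype.ofFinite Γ
  let _ := Fintype.ofFinite (Γ ⧸ D)
  let _ : ∀ g : Γ, Fintype (MulAction.fixedBy (Γ ⧸ D) g) := fun g => Fintype.ofFinite _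
  let _ := Fintype.ofFinite (Quotient (MulAction.orbitRel Γ (Γ ⧸ D)))
  have hb := MulAction.sum_card_fixedBy_eq_card_orbits_mul_card_group Γ (Γ ⧸ D)
  have h1 : Fintype.card (Quotient (MulAction.orbitRel Γ (Γ ⧸ D))) ≤ 1 := by
    rw [Fintype.card_le_one_iff_subsingleton]
    exact MulAction.pretransitive_iff_subsingleton_quotient Γ (Γ ⧸ D) |>.mp inferInstance
  have h2 : ∀ g : Γ, 1 ≤ Fintype.card (MulAction.fixedBy (Γ ⧸ D) g) := by
    intro γ
    obtain ⟨g, hg⟩ := h γ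
    rw [Nat.one_le_iff_ne_zero, ← Nat.pos_iff_ne_zero, Fintype.card_pos_iff]
    refine ⟨⟨((g⁻¹ : Γ) : Γ ⧸ D), ?_⟩⟩
    rw [MulAction.mem_fixedBy, MulAction.Quotient.smul_coe, eq_comm, QuotientGroup.eq]
    simpa [mul_assoc] using hg
  have h3 : Fintype.card (MulAction.fixedBy (Γ ⧸ D) (1 : Γ)) = 1 := by
    by_contra hne
    have : ∑ _g : Γ, 1 < ∑ g : Γ, Fintype.card (MulAction.fixedBy (Γ ⧸ D) g) :=
      Finset.sum_lt_sum (fun g _ => h2 g) ⟨1, Finset.mem_univ _, lt_of_le_of_ne (h2 1) (Ne.symm hne)⟩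
    rw [hb] at this
    simp only [Finset.sum_const, Finset.card_univ, smul_eq_mul, mul_one] at this
    have := Nat.mul_le_mul_right (Fintype.card Γ) h1
    omega
  rw [Subgroup.eq_top_iff']
  intro x
  have h4 := Fintype.card_le_one_iff.mp h3.le
    ⟨((x : Γ) : Γ ⧸ D), by simp⟩ ⟨((1 : Γ) : Γ ⧸ D), by simp⟩
  have h5 : ((1 : Γ) : Γ ⧸ D) = (x : Γ ⧸ D) := (congrArg Subtype.val h4).symm
  rw [QuotientGroup.eq] at h5
  simpa using h5

/-- `P` is a good prime of `S` with Frobenius `γ` over `p` and the integer point `t`. -/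
def GoodPrime {m : ℕ} {S : Type} [CommRing S] [Algebra (MvPolynomial (Fin m) ℤ) S]
    {Γ : Type} [Group Γ] [MulSemiringAction Γ S] (γ : Γ) (p : ℕ) (t : Fin m → ℤ) (P : Ideal S) :
    Prop :=
  P.IsPrime ∧ (p : S) ∈ P ∧ (∀ j, algebraMap (MvPolynomial (Fin m) ℤ) S (X j) - (t j : S) ∈ P) ∧
    (∀ s : S, γ • s - s ^ p ∈ P) ∧ (∀ τ : Γ, (∀ s : S, τ • s - s ∈ P) → τ = 1)

lemma crt_step {m : ℕ} {S : Type} [CommRing S] [Algebra (MvPolynomial (Fin m) ℤ) S]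
    {Γ : Type} [Group Γ] [MulSemiringAction Γ S] (γ : Γ) (p : ℕ) (t t' : Fin m → ℤ) (P : Ideal S)
    (h : GoodPrime γ p t P) (ht : ∀ j, (p : ℤ) ∣ t' j - t j) : GoodPrime γ p t' P := by
  obtain ⟨h1, h2, h3, h4⟩ := h
  refine ⟨h1, h2, fun j => ?_, h4⟩
  obtain ⟨c, hc⟩ := ht j
  have e : (t' j : S) = t j + p * c := by
    have : t' j = t j + p * c := by linarith
    rw [this]; push_cast; ring
  have := P.sub_mem (h3 j) (P.mul_mem_right (c : S) h2)
  rw [e]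
  convert this using 1
  ring

lemma exists_common_point {m : ℕ} {S : Type} [CommRing S] [Algebra (MvPolynomial (Fin m) ℤ) S]
    {Γ : Type} [Group Γ] [Finite Γ] [MulSemiringAction Γ S]
    (H : ∀ (γ : Γ) (B0 : ℕ), ∃ p : ℕ, p.Prime ∧ B0 < p ∧ ∃ (t : Fin m → ℤ) (P : Ideal S),
      GoodPrime γ p t P) :
    ∃ t : Fin m → ℤ, ∀ γ : Γ, ∃ p : ℕ, p.Prime ∧ ∃ P : Ideal S, GoodPrime γ p t P := by
  classical
  let _ := Fintype.ofFinite Γ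
  have key : ∀ s : Finset Γ, ∃ (N : ℕ) (t : Fin m → ℤ), N ≠ 0 ∧
      ∀ γ ∈ s, ∃ p : ℕ, p.Prime ∧ p ∣ N ∧ ∃ P : Ideal S, GoodPrime γ p t P := by
    intro s
    induction s using Finset.induction_on with
    | empty => exact ⟨1, 0, one_ne_zero, by simp⟩
    | insert γ s _ ih =>
      obtain ⟨N, t, hN, ht⟩ := ih
      obtain ⟨p, hp, hpN, t1, P, hP⟩ := H γ N
      have hcop : Nat.Coprime N p :=
        ((Nat.Prime.coprime_iff_not_dvd hp).mpr
          (fun hd => by have := Nat.le_of_dvd (Nat.pos_of_ne_zero hN) hd; omega)).symm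
      have hic : IsCoprime (N : ℤ) (p : ℤ) := Nat.isCoprime_iff_coprime.mpr hcop
      obtain ⟨a, b, hab⟩ := hic
      refine ⟨N * p, fun j => t j * (b * p) + t1 j * (a * N), Nat.mul_ne_zero hN hp.ne_zero, ?_⟩
      intro δ hδ
      rcases Finset.mem_insert.mp hδ with rfl | hδ
      · refine ⟨p, hp, Dvd.intro_left _ rfl, P, crt_step _ _ _ _ _ hP fun j => ?_⟩
        refine ⟨(t j - t1 j) * b, ?_⟩
        linear_combination (t1 j) * hab
      · obtain ⟨q, hq, hqN, P', hP'⟩ := ht δ hδ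
        refine ⟨q, hq, hqN.mul_right p, P', crt_step _ _ _ _ _ hP' fun j => ?_⟩
        refine (Int.natCast_dvd_natCast.mpr hqN).trans ⟨(t1 j - t j) * a, ?_⟩
        linear_combination (t j) * hab
  obtain ⟨N, t, -, h⟩ := key Finset.univ
  refine ⟨t, fun γ => ?_⟩
  obtain ⟨p, hp, -, hP⟩ := h γ (Finset.mem_univ _)
  exact ⟨p, hp, hP⟩


theorem exists_galois_of_goodPrimes {m : ℕ} {S : Type} [CommRing S] [IsDomain S]
    [Algebra (MvPolynomial (Fin m) ℤ) S] [FaithfulSMul (MvPolynomial (Fin m) ℤ) S]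
    {Γ : Type} [Group Γ] [Finite Γ] [MulSemiringAction Γ S]
    [SMulCommClass Γ (MvPolynomial (Fin m) ℤ) S]
    [Algebra.IsInvariant (MvPolynomial (Fin m) ℤ) S Γ]
    (H : ∀ (γ : Γ) (B0 : ℕ), ∃ p : ℕ, p.Prime ∧ B0 < p ∧ ∃ (t : Fin m → ℤ) (P : Ideal S),
      GoodPrime γ p t P) :
    ∃ (L : Type) (_ : Field L) (_ : Algebra ℚ L),
      FiniteDimensional ℚ L ∧ IsGalois ℚ L ∧ Nonempty ((L ≃ₐ[ℚ] L) ≃* Γ) := by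
  classical
  obtain ⟨t, ht⟩ := exists_common_point H
  let R := MvPolynomial (Fin m) ℤ
  have hintg : Algebra.IsIntegral R S := Algebra.IsInvariant.isIntegral R S Γ
  let ev : R →+* ℤ := (aeval t : R →ₐ[ℤ] ℤ).toRingHom
  have hevC : ∀ z : ℤ, ev (z : R) = z := fun z => by simp
  have hevX : ∀ j, ev (X j) = t j := fun j => aeval_X t j
  -- every element of `R` is congruent to its value modulo the `X j - t j`
  have hcong : ∀ (I : Ideal R), (∀ j, (X j : R) - (t j : R) ∈ I) → ∀ r : R, r - (ev r : R) ∈ I := by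
    intro I hI r
    have : (Ideal.Quotient.mk I) = ((Ideal.Quotient.mk I).comp (Int.castRingHom R)).comp ev := by
      apply MvPolynomial.ringHom_ext
      · intro z
        simp [ev]
      · intro j
        have := Ideal.Quotient.eq.mpr (hI j)
        simpa [ev] using this
    rw [← Ideal.Quotient.eq]
    exact DFunLike.congr_fun this r
  let q : Ideal R := RingHom.ker ev
  have hq : q.IsPrime := RingHom.ker_isPrime ev
  obtain ⟨⟨Q, hQp, hQo⟩⟩ := (inferInstance : Nonempty (Ideal.primesOver q S))
  -- the algebra `ℚ` over `R ⧸ q`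
  have hsurj : Function.Surjective ev := fun z => ⟨z, hevC z⟩
  let e : (R ⧸ q) ≃+* ℤ := RingHom.quotientKerEquivOfSurjective hsurj
  let _ : Algebra (R ⧸ q) ℚ := ((Int.castRingHom ℚ).comp (e : (R ⧸ q) →+* ℤ)).toAlgebra
  have hfrac : IsFractionRing (R ⧸ q) ℚ :=
    IsFractionRing.of_ringEquiv_left e (fun x => rfl)
  obtain ⟨L, _, _, hLfrac⟩ : ∃ (L : Type) (_ : Field L) (_ : Algebra (S ⧸ Q) L),
      IsFractionRing (S ⧸ Q) L :=
    ⟨FractionRing (S ⧸ Q), inferInstance, inferInstance, inferInstance⟩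
  let _ : Algebra (R ⧸ q) L := ((algebraMap (S ⧸ Q) L).comp (algebraMap (R ⧸ q) (S ⧸ Q))).toAlgebra
  have htw1 : IsScalarTower (R ⧸ q) (S ⧸ Q) L := IsScalarTower.of_algebraMap_eq' rfl
  have hcast : ∀ x : R ⧸ q, ((e x : ℤ) : R ⧸ q) = x := by
    intro x; apply e.injective; simp
  have hchar : CharZero L := by
    have h1 : CharZero (R ⧸ q) := by
      refine charZero_of_injective_ringHom (f := (e.symm : ℤ →+* (R ⧸ q))) e.symm.injective
    have h2 : Function.Injective (algebraMap (R ⧸ q) (S ⧸ Q)) :=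
      FaithfulSMul.algebraMap_injective _ _
    have h3 : CharZero (S ⧸ Q) := charZero_of_injective_ringHom h2
    exact charZero_of_injective_ringHom (IsFractionRing.injective (S ⧸ Q) L)
  let _ : Algebra ℚ L := DivisionRing.toRatAlgebra
  have htower : IsScalarTower (R ⧸ q) ℚ L := by
    refine IsScalarTower.of_algebraMap_eq fun x => ?_
    rw [← hcast x]
    simp
  have hnormal : Normal ℚ L := Ideal.IsFractionRing.normal Γ q Q ℚ L
  have hgal : IsGalois ℚ L := { __ := hnormal }
  have hfin : Module.Finite ℚ L := Ideal.IsFractionRing.finite_of_isInvariant Γ q Q ℚ L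
  have hnf : NumberField L := { }
  let sh : MulAction.stabilizer Γ Q →* Gal(L/ℚ) := IsFractionRing.stabilizerHom Γ q Q ℚ L
  have hsh : Function.Surjective sh := IsFractionRing.stabilizerHom_surjective Γ q Q ℚ L
  have hgg : IsGaloisGroup Gal(L/ℚ) ℤ (𝓞 L) := IsGaloisGroup.of_isFractionRing _ ℤ (𝓞 L) ℚ L
  -- the map to the ring of integers
  let θ0 : S →+* L := (algebraMap (S ⧸ Q) L).comp (Ideal.Quotient.mk Q)
  have hθR : (algebraMap ℤ L).comp ev = θ0.comp (algebraMap R S) := by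
    apply MvPolynomial.ringHom_ext
    · intro z
      simp
    · intro j
      have h1 : (X j : R) - (t j : R) ∈ q := by
        rw [RingHom.mem_ker, map_sub, hevC, hevX, sub_self]
      have h2 : algebraMap R S ((X j : R) - (t j : R)) ∈ Q := by
        have := hQo.over ▸ h1
        exact this
      have h3 : θ0 (algebraMap R S ((X j : R) - (t j : R))) = 0 := by
        simp only [θ0, RingHom.comp_apply]
        rw [Ideal.Quotient.eq_zero_iff_mem.mpr h2, map_zero]
      rw [map_sub, map_sub, sub_eq_zero] at h3
      rw [RingHom.comp_apply, RingHom.comp_apply, h3]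
      simp [ev]
  have hθint : ∀ s, IsIntegral ℤ (θ0 s) := fun s =>
    IsIntegral.map_of_comp_eq ev θ0 hθR (hintg.isIntegral s)
  let θ : S →+* 𝓞 L := 
    { toFun := fun s => ⟨θ0 s, hθint s⟩
      map_one' := NumberField.RingOfIntegers.ext (map_one θ0)
      map_zero' := NumberField.RingOfIntegers.ext (map_zero θ0)
      map_add' := fun a b => NumberField.RingOfIntegers.ext (map_add θ0 a b)
      map_mul' := fun a b => NumberField.RingOfIntegers.ext (map_mul θ0 a b) }
  have hθ : ∀ s, ((θ s : 𝓞 L) : L) = θ0 s := fun s => rfl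
  -- description of contractions
  have hunder : ∀ (I : Ideal S) (p : ℕ), p.Prime → I.IsPrime → (p : S) ∈ I →
      (∀ j, algebraMap R S (X j) - (t j : S) ∈ I) → ∀ r : R, r ∈ I.under R ↔ (p : ℤ) ∣ ev r := by
    intro I p hp hI hpI hj r
    have h1 := hcong (I.under R) (fun j => by simpa [Ideal.mem_comap] using hj j) r
    have h2 : r ∈ I.under R ↔ ((ev r : ℤ) : R) ∈ I.under R := by
      constructor
      · intro h; simpa using (I.under R).sub_mem h h1
      · intro h; simpa using (I.under R).add_mem h1 h
    rw [h2]
    have hpR : ((p : ℤ) : R) ∈ I.under R := by simpa [Ideal.mem_comap] using hpI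
    constructor
    · intro h
      by_contra hnd
      have hc : IsCoprime (p : ℤ) (ev r) :=
        ((Nat.prime_iff_prime_int.mp hp).irreducible.coprime_iff_not_dvd).mpr hnd
      obtain ⟨a, b, hab⟩ := hc
      have h1 : ((1 : ℤ) : R) ∈ I.under R := by
        rw [← hab]
        push_cast
        exact (I.under R).add_mem ((I.under R).mul_mem_left _ (by simpa using hpR))
          ((I.under R).mul_mem_left _ h)
      have hI' : (I.under R).IsPrime := inferInstance
      exact hI'.ne_top ((Ideal.eq_top_iff_one _).mpr (by simpa using h1))
    · rintro ⟨c, hc⟩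
      rw [hc]
      push_cast
      exact (I.under R).mul_mem_right _ (by simpa using hpR)
  have main : ∀ γ : Γ, ∃ (P P' : Ideal S) (g : Γ) (τ : MulAction.stabilizer Γ Q),
      Q ≤ P' ∧ P = g • P' ∧ (∀ τ : Γ, (∀ s : S, τ • s - s ∈ P) → τ = 1) ∧
      g * (τ : Γ) * g⁻¹ = γ := by
    intro γ
    obtain ⟨p, hp, P, hPp, hpP, hPj, hPF, hPI⟩ := ht γ
    have hpm : (Ideal.span {(p : ℤ)}).IsMaximal := by
      have := PrincipalIdealRing.isMaximal_of_irreducible (Nat.prime_iff_prime_int.mp hp).irreducible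
      exact this
    obtain ⟨⟨𝔓, h𝔓p, h𝔓o⟩⟩ :=
      (inferInstance : Nonempty (Ideal.primesOver (Ideal.span {(p : ℤ)}) (𝓞 L)))
    have h𝔓m : 𝔓.IsMaximal := Ideal.IsMaximal.of_liesOver_isMaximal 𝔓 (Ideal.span {(p : ℤ)})
    obtain ⟨F, hF⟩ := IsArithFrobAt.exists_of_isInvariant ℤ Gal(L/ℚ) 𝔓
    have hcardp : Nat.card (ℤ ⧸ 𝔓.under ℤ) = p := by
      rw [← h𝔓o.over, Nat.card_congr (Int.quotientSpanNatEquivZMod p).toEquiv, Nat.card_zmod]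
    have hF' : ∀ x : 𝓞 L, F • x - x ^ p ∈ 𝔓 := by
      intro x
      have := hF x
      rw [hcardp] at this
      exact this
    obtain ⟨τ, hτ⟩ := hsh F
    let P' := 𝔓.comap θ
    have hP'p : P'.IsPrime := inferInstance
    have hQP' : Q ≤ P' := by
      intro s hs
      have : θ s = 0 := by
        apply NumberField.RingOfIntegers.ext
        rw [hθ]
        simp only [θ0, RingHom.comp_apply, map_zero]
        rw [Ideal.Quotient.eq_zero_iff_mem.mpr hs, map_zero]
      rw [Ideal.mem_comap, this]
      exact 𝔓.zero_mem
    have hθτ : ∀ s, θ ((τ : Γ) • s) = F • θ s := by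
      intro s
      apply NumberField.RingOfIntegers.ext
      rw [hθ, ← hτ]
      exact (IsFractionRing.stabilizerHom_apply_apply_mk Γ q Q ℚ L τ s).symm
    have hP'F : ∀ s : S, (τ : Γ) • s - s ^ p ∈ P' := by
      intro s
      rw [Ideal.mem_comap, map_sub, map_pow, hθτ]
      exact hF' _
    have hpP' : (p : S) ∈ P' := by
      rw [Ideal.mem_comap, map_natCast]
      have h1 : (p : ℤ) ∈ 𝔓.under ℤ := by
        rw [← h𝔓o.over]; exact Ideal.mem_span_singleton_self _
      simpa [Ideal.mem_comap] using h1
    have hP'j : ∀ j, algebraMap R S (X j) - (t j : S) ∈ P' := by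
      intro j
      apply hQP'
      have h1 : (X j : R) - (t j : R) ∈ q := by
        rw [RingHom.mem_ker, map_sub, hevC, hevX, sub_self]
      have h2 : algebraMap R S ((X j : R) - (t j : R)) ∈ Q := by
        have := hQo.over ▸ h1
        exact this
      simpa using h2
    have hu : P'.under R = P.under R := by
      ext r
      rw [hunder P' p hp hP'p hpP' hP'j, hunder P p hp hPp hpP hPj]
    obtain ⟨g, hg⟩ := Algebra.IsInvariant.exists_smul_of_under_eq R S Γ P' P hu
    refine ⟨P, P', g, τ, hQP', hg, hPI, ?_⟩
    have hconj : ∀ s : S, (g * (τ : Γ) * g⁻¹) • s - s ^ p ∈ P := by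
      intro s
      rw [hg]
      have := Ideal.smul_mem_pointwise_smul g _ _ (hP'F (g⁻¹ • s))
      simpa [smul_sub, mul_smul, smul_pow'] using this
    have := hPI ((g * (τ : Γ) * g⁻¹) * γ⁻¹) (fun s => by
      have h1 := P.sub_mem (hconj (γ⁻¹ • s)) (hPF (γ⁻¹ • s))
      simpa [mul_smul] using h1)
    exact mul_inv_eq_one.mp this
  have htop : MulAction.stabilizer Γ Q = ⊤ := by
    apply subgroup_eq_top_of_conj
    intro γ
    obtain ⟨-, -, g, τ, -, -, -, h⟩ := main γ
    refine ⟨g⁻¹, ?_⟩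
    rw [← h]
    simpa [mul_assoc] using τ.2
  have hinj : Function.Injective sh := by
    rw [injective_iff_map_eq_one]
    intro τ hτ
    have h1 : τ ∈ sh.ker := hτ
    rw [IsFractionRing.ker_stabilizerHom] at h1
    obtain ⟨P, P', g, -, hQP', hg, hPI, -⟩ := main 1
    have := hPI (g * (τ : Γ) * g⁻¹) (fun s => by
      rw [hg]
      have h2 : (τ : Γ) • (g⁻¹ • s) - g⁻¹ • s ∈ P' := hQP' (h1 (g⁻¹ • s))
      have := Ideal.smul_mem_pointwise_smul g _ _ h2
      simpa [smul_sub, mul_smul] using this)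
    have h3 : (τ : Γ) = 1 := by
      simpa using this
    exact Subtype.ext h3
  refine ⟨L, inferInstance, inferInstance, hfin, hgal, ⟨?_⟩⟩
  exact ((MulEquiv.ofBijective sh ⟨hinj, hsh⟩).symm.trans (MulEquiv.subgroupCongr htop)).trans
    Subgroup.topEquiv

end PartA


section PartB
open MvPolynomial

lemma exists_place {A M F R : Type} [CommRing A] [IsDomain A] [IsIntegrallyClosed A] [Field M]
    [Algebra A M] [IsFractionRing A M] [Field F] (ev : A →+* F) [CommRing R] [Algebra R M]
    (hR : ∀ r : R, ∃ a b : A, ev b ≠ 0 ∧ algebraMap R M r * algebraMap A M b = algebraMap A M a) :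
    ∃ ψ : integralClosure R M →+* F,
      (∀ (s : integralClosure R M) (a b : A),
        (s : M) * algebraMap A M b = algebraMap A M a → ψ s * ev b = ev a) ∧
      (∀ s : integralClosure R M, ∃ a b : A, ev b ≠ 0 ∧
        (s : M) * algebraMap A M b = algebraMap A M a) := by
  have hq : (RingHom.ker ev).IsPrime := RingHom.ker_isPrime ev
  have hle : (RingHom.ker ev).primeCompl ≤ nonZeroDivisors A := Ideal.primeCompl_le_nonZeroDivisors _
  let O := Localization.subalgebra.ofField M (RingHom.ker ev).primeCompl hle
  have hmem : ∀ x : M, x ∈ O ↔ ∃ a b : A, ev b ≠ 0 ∧ x * algebraMap A M b = algebraMap A M a := by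
    intro x
    constructor
    · rintro ⟨a, b, hb, rfl⟩
      refine ⟨a, b, hb, ?_⟩
      have : algebraMap A M b ≠ 0 := by
        rw [Ne, FaithfulSMul.algebraMap_eq_zero_iff]
        rintro rfl
        exact hb (map_zero ev)
      field_simp
    · rintro ⟨a, b, hb, h⟩
      refine ⟨a, b, hb, ?_⟩
      have : algebraMap A M b ≠ 0 := by
        rw [Ne, FaithfulSMul.algebraMap_eq_zero_iff]
        rintro rfl
        exact hb (map_zero ev)
      rw [← h]
      field_simp
  have hO : IsIntegrallyClosed O :=
    isIntegrallyClosed_of_isLocalization O (RingHom.ker ev).primeCompl hle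
  have hintg : ∀ s : integralClosure R M, (s : M) ∈ O := by
    intro s
    let f : R →+* O := (algebraMap R M).codRestrict O.toSubring (fun r => (hmem _).mpr (hR r))
    have h1 : IsIntegral O (s : M) :=
      IsIntegral.map_of_comp_eq f (RingHom.id M) rfl s.2
    obtain ⟨y, hy⟩ := IsIntegrallyClosed.isIntegral_iff.mp h1
    rw [← hy]
    exact y.2
  let inc : integralClosure R M →+* O :=
    ((integralClosure R M).val.toRingHom).codRestrict O.toSubring hintg
  have hu : ∀ y : (RingHom.ker ev).primeCompl, IsUnit (ev y) := fun y =>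
    (isUnit_iff_ne_zero).mpr y.2
  let l : O →+* F := IsLocalization.lift hu
  refine ⟨l.comp inc, fun s a b h => ?_, fun s => (hmem _).mp (hintg s)⟩
  have h1 : inc s * algebraMap A O b = algebraMap A O a := Subtype.ext h
  have h2 := congrArg l h1
  rw [map_mul] at h2
  simpa [l] using h2

lemma exists_intCast_of_pow {F : Type} [Field F] {p : ℕ} (hp : p.Prime) [CharP F p] (x : F)
    (hx : x ^ p = x) : ∃ z : ℤ, (z : F) = x := by
  have := Fact.mk hp
  have h1 := (Subfield.mem_bot_iff_pow_eq_self F p).mpr hx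
  rw [← ZMod.fieldRange_castHom_eq_bot (K := F) p] at h1
  obtain ⟨z, rfl⟩ := h1
  exact ⟨z.cast, by simp⟩

theorem exists_galois_of_fixed {n m : ℕ} {M : Type} [Field M]
    [Algebra (MvPolynomial (Fin n) ℤ) M] [IsFractionRing (MvPolynomial (Fin n) ℤ) M]
    [Algebra (MvPolynomial (Fin m) ℤ) M] [FaithfulSMul (MvPolynomial (Fin m) ℤ) M]
    (G : Subgroup (Equiv.Perm (Fin n))) [MulSemiringAction G M]
    [SMulCommClass G (MvPolynomial (Fin m) ℤ) M]
    (hact : ∀ (σ : G) (i : Fin n), σ • algebraMap (MvPolynomial (Fin n) ℤ) M (X i) =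
      algebraMap (MvPolynomial (Fin n) ℤ) M (X ((σ : Equiv.Perm (Fin n)) i)))
    (hfix : ∀ y : M, (∀ σ : G, σ • y = y) → ∃ a b : MvPolynomial (Fin m) ℤ, b ≠ 0 ∧
      y * algebraMap (MvPolynomial (Fin m) ℤ) M b = algebraMap (MvPolynomial (Fin m) ℤ) M a) :
    ∃ (L : Type) (_ : Field L) (_ : Algebra ℚ L),
      FiniteDimensional ℚ L ∧ IsGalois ℚ L ∧ Nonempty ((L ≃ₐ[ℚ] L) ≃* G) := by
  classical
  let A := MvPolynomial (Fin n) ℤ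
  let R := MvPolynomial (Fin m) ℤ
  let S := integralClosure R M
  have hRinj : Function.Injective (algebraMap R M) := FaithfulSMul.algebraMap_injective R M
  have hAinj : Function.Injective (algebraMap A M) := IsFractionRing.injective A M
  -- invariants
  let _ : Algebra (FractionRing R) M := FractionRing.liftAlgebra R M
  have htow : IsScalarTower R (FractionRing R) M := FractionRing.isScalarTower_liftAlgebra R M
  have hinvK : Algebra.IsInvariant (FractionRing R) M G := by
    refine ⟨fun y hy => ?_⟩
    obtain ⟨a, b, hb, h⟩ := hfix y hy
    refine ⟨algebraMap R (FractionRing R) a / algebraMap R (FractionRing R) b, ?_⟩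
    rw [map_div₀, ← IsScalarTower.algebraMap_apply, ← IsScalarTower.algebraMap_apply, ← h]
    exact mul_div_cancel_right₀ _ ((map_ne_zero_iff _ hRinj).mpr hb)
  have hinvS : Algebra.IsInvariant R S G := by
    refine ⟨fun s hs => ?_⟩
    obtain ⟨k, hk⟩ := hinvK.isInvariant (s : M) (fun g => by
      rw [← integralClosure.coe_smul, hs g])
    have h1 : IsIntegral R k := by
      rw [← isIntegral_algebraMap_iff (algebraMap (FractionRing R) M).injective, hk]
      exact s.2
    obtain ⟨r, rfl⟩ := IsIntegrallyClosed.isIntegral_iff.mp h1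
    refine ⟨r, Subtype.ext ?_⟩
    rw [← hk, ← IsScalarTower.algebraMap_apply]
    rfl
  have hfaith : FaithfulSMul R S := by
    rw [faithfulSMul_iff_algebraMap_injective]
    intro a b h
    exact hRinj (congrArg Subtype.val h)
  have halg : Algebra.IsAlgebraic R M := by
    have h1 : Algebra.IsIntegral (FractionRing R) M := Algebra.IsInvariant.isIntegral _ M G
    have h2 := IsLocalization.isAlgebraic (R := R) (FractionRing R) (nonZeroDivisors R)
    exact Algebra.IsAlgebraic.trans R (FractionRing R) M
  -- the permutation action on polynomials
  have hact' : ∀ (σ : G) (a : A), σ • algebraMap A M a =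
      algebraMap A M (rename (σ : Equiv.Perm (Fin n)) a) := by
    intro σ a
    have : (MulSemiringAction.toRingHom G M σ).comp (algebraMap A M) =
        (algebraMap A M).comp (rename (σ : Equiv.Perm (Fin n))).toRingHom := by
      apply MvPolynomial.ringHom_ext
      · intro z
        simp
      · intro j
        have := hact σ j
        simpa using this
    exact DFunLike.congr_fun this a
  have hnum : ∀ y : M, ∃ a b : A, b ≠ 0 ∧ y * algebraMap A M b = algebraMap A M a := by
    intro y
    obtain ⟨a, b, hb, rfl⟩ := IsFractionRing.div_surjective A y
    have hb := nonZeroDivisors.ne_zero hb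
    exact ⟨a, b, hb, div_mul_cancel₀ _ ((map_ne_zero_iff _ hAinj).mpr hb)⟩
  choose a b hb0 hab using fun j => hnum (algebraMap R M (X j))
  choose r hr0 hrint using fun i => (halg.isAlgebraic (algebraMap A M (X i))).exists_integral_multiple
  choose c d hd0 hcd using fun i => hnum (algebraMap R M (r i))
  have hc0 : ∀ i, c i ≠ 0 := by
    intro i h
    have := hcd i
    rw [h, map_zero, mul_eq_zero] at this
    rcases this with h1 | h1
    · exact hr0 i ((map_eq_zero_iff _ hRinj).mp h1)
    · exact hd0 i ((map_eq_zero_iff _ hAinj).mp h1)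
  let h : A := (∏ j, b j) * (∏ i, c i) *
    ∏ x : Fin n × Fin n, if x.1 = x.2 then 1 else (X x.1 - X x.2)
  have hh : h ≠ 0 := by
    refine mul_ne_zero (mul_ne_zero (Finset.prod_ne_zero_iff.mpr fun j _ => hb0 j)
      (Finset.prod_ne_zero_iff.mpr fun j _ => hc0 j)) (Finset.prod_ne_zero_iff.mpr fun x _ => ?_)
    split_ifs with hx
    · exact one_ne_zero
    · rw [sub_ne_zero]
      exact fun h => hx (X_injective h)
  refine exists_galois_of_goodPrimes (m := m) (S := S) (Γ := G) ?_
  intro σ B0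
  obtain ⟨p, hp, hpB, F, _, _, ξ, hξ, hξh⟩ := exists_twisted_point h hh (σ : Equiv.Perm (Fin n)) B0
  refine ⟨p, hp, hpB, ?_⟩
  have := Fact.mk hp
  let ev : A →+* F := (aeval ξ : A →ₐ[ℤ] F).toRingHom
  have hevh : ev h ≠ 0 := hξh
  have hevX : ∀ i, ev (X i) = ξ i := fun i => aeval_X ξ i
  simp only [h, map_mul, map_prod] at hevh
  have hevb : ∀ j, ev (b j) ≠ 0 := fun j =>
    Finset.prod_ne_zero_iff.mp (left_ne_zero_of_mul (left_ne_zero_of_mul hevh)) j (Finset.mem_univ j)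
  have hevc : ∀ j, ev (c j) ≠ 0 := fun j =>
    Finset.prod_ne_zero_iff.mp (right_ne_zero_of_mul (left_ne_zero_of_mul hevh)) j
      (Finset.mem_univ j)
  have hξinj : Function.Injective ξ := by
    intro i k hik
    by_contra hne
    have := Finset.prod_ne_zero_iff.mp (right_ne_zero_of_mul hevh) (i, k) (Finset.mem_univ _)
    simp only [hne, if_false, map_sub, hevX] at this
    exact this (sub_eq_zero.mpr hik)
  have hfrob : ∀ x : A, ev (rename (σ : Equiv.Perm (Fin n)) x) = ev x ^ p := by
    intro x
    have : ev.comp (rename (σ : Equiv.Perm (Fin n))).toRingHom = (frobenius F p).comp ev := by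
      apply MvPolynomial.ringHom_ext
      · intro z
        simp
      · intro j
        change ev (rename (σ : Equiv.Perm (Fin n)) (X j)) = ev (X j) ^ p
        rw [rename_X, hevX, hevX, hξ]
    exact DFunLike.congr_fun this x
  have hR : ∀ r : R, ∃ a b : A, ev b ≠ 0 ∧
      algebraMap R M r * algebraMap A M b = algebraMap A M a := by
    intro r
    induction r using MvPolynomial.induction_on with
    | C z => exact ⟨(z : A), 1, by simp, by simp⟩
    | add f g hf hg =>
      obtain ⟨a1, b1, h1, e1⟩ := hf
      obtain ⟨a2, b2, h2, e2⟩ := hg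
      refine ⟨a1 * b2 + a2 * b1, b1 * b2, by rw [map_mul]; exact mul_ne_zero h1 h2, ?_⟩
      simp only [map_mul, map_add]
      rw [← e1, ← e2]
      ring
    | mul_X f j hf =>
      obtain ⟨a1, b1, h1, e1⟩ := hf
      refine ⟨a1 * a j, b1 * b j, by rw [map_mul]; exact mul_ne_zero h1 (hevb j), ?_⟩
      simp only [map_mul]
      rw [← e1, ← hab j]
      ring
  obtain ⟨ψ, hψ, hex⟩ := exists_place ev hR
  have hψσ : ∀ s : S, ψ (σ • s) = ψ s ^ p := by
    intro s
    obtain ⟨a1, b1, h1, e1⟩ := hex s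
    have e2 : ((σ • s : S) : M) * algebraMap A M (rename (σ : Equiv.Perm (Fin n)) b1) =
        algebraMap A M (rename (σ : Equiv.Perm (Fin n)) a1) := by
      rw [integralClosure.coe_smul, ← hact', ← hact', ← smul_mul', e1]
    have e3 := hψ _ _ _ e2
    rw [hfrob, hfrob, ← hψ _ _ _ e1, mul_pow] at e3
    exact mul_right_cancel₀ (pow_ne_zero p h1) e3
  have hT : ∀ j, ∃ z : ℤ, (z : F) = ψ (algebraMap R S (X j)) := by
    intro j
    apply exists_intCast_of_pow hp
    rw [← hψσ, smul_algebraMap]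
  choose t ht using hT
  refine ⟨t, RingHom.ker ψ, RingHom.ker_isPrime ψ, ?_, fun j => ?_, fun s => ?_, fun τ hτ => ?_⟩
  · rw [RingHom.mem_ker, map_natCast, CharP.cast_eq_zero]
  · rw [RingHom.mem_ker, map_sub, map_intCast, ht, sub_self]
  · rw [RingHom.mem_ker, map_sub, map_pow, hψσ, sub_self]
  · apply Subtype.ext
    ext i
    have h1 := hτ ⟨r i • algebraMap A M (X i), hrint i⟩
    rw [RingHom.mem_ker, map_sub, sub_eq_zero] at h1
    have e1 := hψ ⟨r i • algebraMap A M (X i), hrint i⟩ (c i * X i) (d i) (by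
      rw [map_mul, ← hcd i]
      change (r i • algebraMap A M (X i)) * algebraMap A M (d i) = _
      rw [Algebra.smul_def]; ring)
    have e2 := hψ (τ • ⟨r i • algebraMap A M (X i), hrint i⟩) (c i * X ((τ : Equiv.Perm (Fin n)) i))
      (d i) (by
        rw [integralClosure.coe_smul, map_mul, ← hcd i]
        change (τ • r i • algebraMap A M (X i)) * algebraMap A M (d i) = _
        rw [smul_comm, hact, Algebra.smul_def]; ring)
    rw [h1, e1, map_mul, map_mul, hevX, hevX] at e2
    have := hξinj (mul_left_cancel₀ (hevc i) e2)
    rw [← this]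
    rfl
end PartB

section PartC
open MvPolynomial

theorem exists_galois_of_ringHoms {n m : ℕ} {M : Type} [Field M]
    (α : MvPolynomial (Fin n) ℤ →+* M) (hα : Function.Injective α)
    (hαf : ∀ y : M, ∃ a b : MvPolynomial (Fin n) ℤ, b ≠ 0 ∧ y * α b = α a)
    (β : MvPolynomial (Fin m) ℤ →+* M) (hβ : Function.Injective β)
    (G : Subgroup (Equiv.Perm (Fin n))) (φ : G →* (M ≃+* M))
    (hact : ∀ (σ : G) (i : Fin n), φ σ (α (X i)) = α (X ((σ : Equiv.Perm (Fin n)) i)))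
    (hβφ : ∀ (σ : G) r, φ σ (β r) = β r)
    (hfix : ∀ y : M, (∀ σ : G, φ σ y = y) → ∃ a b : MvPolynomial (Fin m) ℤ, b ≠ 0 ∧
      y * β b = β a) :
    ∃ (L : Type) (_ : Field L) (_ : Algebra ℚ L),
      FiniteDimensional ℚ L ∧ IsGalois ℚ L ∧ Nonempty ((L ≃ₐ[ℚ] L) ≃* G) := by
  let iA : Algebra (MvPolynomial (Fin n) ℤ) M := α.toAlgebra
  let iR : Algebra (MvPolynomial (Fin m) ℤ) M := β.toAlgebra
  have hfr : @IsFractionRing (MvPolynomial (Fin n) ℤ) _ M _ iA := by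
    have : @FaithfulSMul (MvPolynomial (Fin n) ℤ) M iA.toSMul := by
      rw [faithfulSMul_iff_algebraMap_injective]
      exact hα
    refine IsFractionRing.of_field (MvPolynomial (Fin n) ℤ) M fun z => ?_
    obtain ⟨a, b, hb, h⟩ := hαf z
    refine ⟨a, b, ?_⟩
    change z = α a / α b
    rw [← h, mul_div_cancel_right₀ _ ((map_ne_zero_iff _ hα).mpr hb)]
  have hfa : @FaithfulSMul (MvPolynomial (Fin m) ℤ) M iR.toSMul := by
    rw [faithfulSMul_iff_algebraMap_injective]
    exact hβ
  let iG : MulSemiringAction G M := MulSemiringAction.compHom M (φ : G →* RingAut M)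
  have hcomm : @SMulCommClass G (MvPolynomial (Fin m) ℤ) M _ iR.toSMul := by
    refine ⟨fun σ r y => ?_⟩
    change φ σ (β r * y) = β r * φ σ y
    rw [map_mul, hβφ]
  exact @exists_galois_of_fixed n m M _ iA hfr iR hfa G iG hcomm hact hfix

lemma exists_int_multiple {k : ℕ} (u : MvPolynomial (Fin k) ℚ) :
    ∃ (N : ℤ) (a : MvPolynomial (Fin k) ℤ), N ≠ 0 ∧
      C (N : ℚ) * u = MvPolynomial.map (Int.castRingHom ℚ) a := by
  induction u using MvPolynomial.induction_on with
  | C q =>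
    refine ⟨q.den, C q.num, by exact_mod_cast q.den_ne_zero, ?_⟩
    rw [map_C, ← C_mul]
    congr 1
    push_cast
    rw [mul_comm]
    exact q.mul_den_eq_num
  | add f g hf hg =>
    obtain ⟨N, a, hN, h⟩ := hf
    obtain ⟨N', a', hN', h'⟩ := hg
    refine ⟨N * N', C N' * a + C N * a', mul_ne_zero hN hN', ?_⟩
    simp only [map_add, map_mul, ← h, ← h', Int.cast_mul, eq_intCast, map_intCast]
    ring
  | mul_X f j hf =>
    obtain ⟨N, a, hN, h⟩ := hf
    refine ⟨N, a * X j, hN, ?_⟩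
    rw [map_mul, ← h, map_X]
    ring

lemma map_int_injective (k : ℕ) : Function.Injective
    (((algebraMap (MvPolynomial (Fin k) ℚ) (FractionRing (MvPolynomial (Fin k) ℚ))).comp
      (MvPolynomial.map (Int.castRingHom ℚ)) :
      MvPolynomial (Fin k) ℤ →+* FractionRing (MvPolynomial (Fin k) ℚ))) := by
  rw [RingHom.coe_comp]
  exact (IsFractionRing.injective _ _).comp
    (MvPolynomial.map_injective _ (Int.castRingHom ℚ).injective_int)

lemma exists_int_fraction {k : ℕ} (y : FractionRing (MvPolynomial (Fin k) ℚ)) :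
    ∃ a b : MvPolynomial (Fin k) ℤ, b ≠ 0 ∧
      y * ((algebraMap (MvPolynomial (Fin k) ℚ) (FractionRing (MvPolynomial (Fin k) ℚ))).comp
        (MvPolynomial.map (Int.castRingHom ℚ))) b =
      ((algebraMap (MvPolynomial (Fin k) ℚ) (FractionRing (MvPolynomial (Fin k) ℚ))).comp
        (MvPolynomial.map (Int.castRingHom ℚ))) a := by
  obtain ⟨u, v, hv, rfl⟩ := IsFractionRing.div_surjective (MvPolynomial (Fin k) ℚ) y
  have hv0 := nonZeroDivisors.ne_zero hv
  obtain ⟨N, a, hN, h⟩ := exists_int_multiple u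
  obtain ⟨N', b, hN', h'⟩ := exists_int_multiple v
  have hv1 : algebraMap (MvPolynomial (Fin k) ℚ) (FractionRing (MvPolynomial (Fin k) ℚ)) v ≠ 0 :=
    (map_ne_zero_iff _ (IsFractionRing.injective _ _)).mpr hv0
  refine ⟨C N' * a, C N * b, mul_ne_zero (by simpa using hN) ?_, ?_⟩
  · rintro rfl
    rw [map_zero, mul_eq_zero] at h'
    rcases h' with h' | h'
    · rw [C_eq_zero] at h'
      exact hN' (by exact_mod_cast h')
    · exact hv0 h'
  · simp only [RingHom.comp_apply, map_mul, ← h, ← h', eq_intCast, map_intCast]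
    field_simp

end PartC

/-- **Noether's problem implies realizability.** Let `M = ℚ(x₁, …, xₙ)` be the field of
rational functions in `n` indeterminates over `ℚ`, and let `G ≤ Sₙ` act on `M` by
permuting the indeterminates (encoded by a homomorphism `φ` from `G` to the group of
`ℚ`-automorphisms of `M` sending each variable `xᵢ` to `x_{σ(i)}`). If the fixed field
`K = M^G` is rational over `ℚ`, i.e. `ℚ`-isomorphic to a field of rational functions
`ℚ(w₁, …, w_m)`, then `G` occurs as a Galois group over `ℚ`. -/
theorem noether_problem_implies_occurs_as_galoisGroup (n : ℕ) (hn : 1 ≤ n)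
    (G : Subgroup (Equiv.Perm (Fin n)))
    (φ : G →* (FractionRing (MvPolynomial (Fin n) ℚ) ≃ₐ[ℚ]
      FractionRing (MvPolynomial (Fin n) ℚ)))
    (hφ : ∀ (σ : G) (i : Fin n),
      φ σ (algebraMap (MvPolynomial (Fin n) ℚ) (FractionRing (MvPolynomial (Fin n) ℚ))
          (MvPolynomial.X i)) =
        algebraMap (MvPolynomial (Fin n) ℚ) (FractionRing (MvPolynomial (Fin n) ℚ))
          (MvPolynomial.X ((σ : Equiv.Perm (Fin n)) i)))
    (hrat : ∃ m : ℕ, Nonempty ((IntermediateField.fixedField φ.range) ≃ₐ[ℚ]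
      FractionRing (MvPolynomial (Fin m) ℚ))) :
    ∃ (L : Type) (_ : Field L) (_ : Algebra ℚ L),
      FiniteDimensional ℚ L ∧ IsGalois ℚ L ∧
        Nonempty ((L ≃ₐ[ℚ] L) ≃* G) := by
  classical
  obtain ⟨m, ⟨e⟩⟩ := hrat
  let φ' : G →* (FractionRing (MvPolynomial (Fin n) ℚ) ≃+* FractionRing (MvPolynomial (Fin n) ℚ)) :=
    { toFun := fun σ => (φ σ).toRingEquiv
      map_one' := by rw [map_one]; rfl
      map_mul' := fun σ τ => by rw [map_mul]; rfl }
  let emb : FractionRing (MvPolynomial (Fin m) ℚ) →+* FractionRing (MvPolynomial (Fin n) ℚ) :=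
    (algebraMap (IntermediateField.fixedField φ.range) _).comp (e.symm : _ →+* _)
  refine exists_galois_of_ringHoms
    ((algebraMap (MvPolynomial (Fin n) ℚ) (FractionRing (MvPolynomial (Fin n) ℚ))).comp
      (MvPolynomial.map (Int.castRingHom ℚ))) (map_int_injective n) exists_int_fraction
    (emb.comp ((algebraMap (MvPolynomial (Fin m) ℚ) (FractionRing (MvPolynomial (Fin m) ℚ))).comp
      (MvPolynomial.map (Int.castRingHom ℚ))))
    (emb.injective.comp (map_int_injective m)) G φ' ?_ ?_ ?_
  · intro σ i
    rw [RingHom.comp_apply, RingHom.comp_apply, MvPolynomial.map_X, MvPolynomial.map_X]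
    exact hφ σ i
  · intro σ r
    exact (e.symm _).2 ⟨φ σ, σ, rfl⟩
  · intro y hy
    have hmem : y ∈ IntermediateField.fixedField φ.range := by
      rintro ⟨_, σ, rfl⟩
      exact hy σ
    obtain ⟨a, b, hb, h⟩ := exists_int_fraction (e ⟨y, hmem⟩)
    refine ⟨a, b, hb, ?_⟩
    have h1 := congrArg emb h
    rw [map_mul] at h1
    have h2 : emb (e ⟨y, hmem⟩) = y := by
      change ((e.symm (e ⟨y, hmem⟩) : IntermediateField.fixedField φ.range) : _) = y
      rw [AlgEquiv.symm_apply_apply]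
    rw [h2] at h1
    exact h1
end
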